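/- Uniqueness of small self-similar solutions: there exists δ > 0 such that if S and S' are two self-similar solutions of mKdV with ‖S‖_{E(1)} ≤ δ, ‖S'‖_{E(1)} ≤ δ, and Ŝ(1)(0⁺) = Ŝ'(1)(0⁺), then S = S'. -/

import Mathlib

open MeasureTheory Set Filter Topology

noncomputable section

namespace MKdVPaper

/-- The Japanese bracket `⟨y⟩ = √(1+y²)`. -/
def jap (y : ℝ) : ℝ := Real.sqrt (1 + y ^ 2)

/-- Truncated Fourier-type integral recovering the physical function from a profile `w`:
`(1/π) Re ∫_0^R e^{i(px + p³ t)} w(p) dp`. -/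
def physPartial (w : ℝ → ℂ) (t x R : ℝ) : ℝ :=
  (1 / Real.pi) *
    (∫ p in Ioc (0 : ℝ) R, Complex.exp (Complex.I * ((p * x + p ^ 3 * t : ℝ) : ℂ)) * w p).re

/-- `u` is the physical-space function associated with the profile `w` at time `t`, i.e.
`u(x) = (1/π) Re ∫_0^∞ e^{i(px + p³t)} w(p) dp` as an improper integral. -/
def IsPhys (w : ℝ → ℂ) (t : ℝ) (u : ℝ → ℝ) : Prop :=
  ∀ x : ℝ, Tendsto (fun R => physPartial w t x R) atTop (𝓝 (u x))

/-- Sup norm of a profile. -/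
def supN (w : ℝ → ℂ) : ℝ := ⨆ p : ℝ, ‖w p‖

/-- `L²((0,∞))` norm of the derivative of the profile. -/
def dL2 (w : ℝ → ℂ) : ℝ := (eLpNorm (deriv w) 2 (volume.restrict (Ioi 0))).toReal

/-- The `E(t)` norm: `‖ũ‖_{L^∞} + t^{-1/6} ‖∂_p ũ‖_{L²((0,∞))}`. -/
def EnormP (t : ℝ) (w : ℝ → ℂ) : ℝ := supN w + t ^ (-(1 / 6 : ℝ)) * dL2 w

/-- Membership conditions for `E(t)` on the profile side: profile of a real-valued
distribution, bounded and continuous on `(0,∞)`, with derivative in `L²((0,∞))`. -/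
structure MemE (w : ℝ → ℂ) : Prop where
  symm : ∀ p : ℝ, w (-p) = starRingEnd ℂ (w p)
  cont : ContinuousOn w (Ioi 0)
  bdd : BddAbove (range fun p : ℝ => ‖w p‖)
  diff : ∀ p ∈ Ioi (0 : ℝ), DifferentiableAt ℝ w p
  derivL2 : MemLp (deriv w) 2 (volume.restrict (Ioi 0))

/-- A space-time function of class `E(I)`: a physical function `u` together with its
profile `w(t,p) = e^{-itp³} û(t,p)`. -/
structure ESol (I : Set ℝ) where
  u : ℝ → ℝ → ℝ
  w : ℝ → ℝ → ℂ
  memE : ∀ t ∈ I, MemE (w t)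
  isPhys : ∀ t ∈ I, IsPhys (w t) t (u t)
  contt : ContinuousOn (fun q : ℝ × ℝ => w q.1 q.2) (I ×ˢ Ioi 0)

/-- Finiteness of the `E(I)` norm: `sup_{t ∈ I} ‖u(t)‖_{E(t)} < ∞`. -/
def FiniteEnorm (I : Set ℝ) (sol : ESol I) : Prop :=
  BddAbove ((fun t => EnormP t (sol.w t)) '' I)

/-- Time derivative of a test function. -/
def dt1 (φ : ℝ → ℝ → ℝ) : ℝ → ℝ → ℝ := fun t x => deriv (fun s => φ s x) t

/-- Space derivative of a test function. -/
def dx1 (φ : ℝ → ℝ → ℝ) : ℝ → ℝ → ℝ := fun t x => deriv (fun y => φ t y) x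

/-- `u` is a distributional solution of `∂ₜ u + ∂ₓ³ u + ε ∂ₓ(u³) = 0` on `I × ℝ`. -/
def IsSolOn (ε : ℝ) (u : ℝ → ℝ → ℝ) (I : Set ℝ) : Prop :=
  ∀ φ : ℝ → ℝ → ℝ,
    ContDiff ℝ (⊤ : ℕ∞) (fun q : ℝ × ℝ => φ q.1 q.2) →
    HasCompactSupport (fun q : ℝ × ℝ => φ q.1 q.2) →
    tsupport (fun q : ℝ × ℝ => φ q.1 q.2) ⊆ interior I ×ˢ univ →
    (∫ q : ℝ × ℝ,
      (u q.1 q.2 * (dt1 φ q.1 q.2 + dx1 (dx1 (dx1 φ)) q.1 q.2)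
        + ε * u q.1 q.2 ^ 3 * dx1 φ q.1 q.2)) = 0

/-- Self-similar solution: `S(t,x) = t^{-1/3} V(t^{-1/3} x)`. -/
def SelfSimilar {I : Set ℝ} (S : ESol I) : Prop :=
  ∃ V : ℝ → ℝ, ∀ t ∈ I, ∀ x : ℝ,
    S.u t x = t ^ (-(1 / 3 : ℝ)) * V (t ^ (-(1 / 3 : ℝ)) * x)

/-- The Fourier transform at time 1 recovered from the profile: `û(1,p) = e^{ip³} ũ(1,p)`. -/
def hatAtOne (w : ℝ → ℂ) : ℝ → ℂ := fun p => Complex.exp (Complex.I * ((p ^ 3 : ℝ) : ℂ)) * w p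

/-- The Fourier transforms at time 1 have the same limit at frequency `0⁺`. -/
def SameZeroLimit (w₁ w₂ : ℝ → ℂ) : Prop :=
  ∃ c : ℂ, Tendsto (hatAtOne w₁) (𝓝[>] (0 : ℝ)) (𝓝 c) ∧
    Tendsto (hatAtOne w₂) (𝓝[>] (0 : ℝ)) (𝓝 c)

/-- Truncated Airy–Fock integral. -/
def AiP (z R : ℝ) : ℂ :=
  ((1 / Real.pi : ℝ) : ℂ) *
    ∫ p in Ioc (0 : ℝ) R, Complex.exp (Complex.I * ((p * z + p ^ 3 : ℝ) : ℂ))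

/-- The Airy–Fock function `Ai(z) = (1/π)∫_0^∞ e^{i(pz+p³)} dp` (improper integral). -/
def AiFock (z : ℝ) : ℂ := limUnder atTop fun R => AiP z R

end MKdVPaper

section

open scoped FourierTransform SchwartzMap

/-- Plancherel's identity for the Fourier integral of a function in `L¹ ∩ L²`. -/
theorem eLpNorm_fourier_eq {f : ℝ → ℂ} (hf : Integrable f) (hf₂ : MemLp f 2) :
    eLpNorm (𝓕 f) 2 volume = eLpNorm f 2 volume := by
  have hcont : Continuous (𝓕 f) :=
    VectorFourier.fourierIntegral_continuous Real.continuous_fourierChar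
      (by exact continuous_inner) hf
  have key : ∀ᵐ x, (𝓕 (hf₂.toLp f) : Lp ℂ 2 (volume : Measure ℝ)) x = 𝓕 f x := by
    refine ae_eq_of_integral_contDiff_smul_eq
      ((Lp.memLp (𝓕 (hf₂.toLp f))).locallyIntegrable (by norm_num))
      hcont.locallyIntegrable fun g hg hgc => ?_
    have hg' : ContDiff ℝ (⊤ : ℕ∞) (fun x => (g x : ℂ)) := Complex.ofRealCLM.contDiff.comp hg
    have hgc' : HasCompactSupport (fun x => (g x : ℂ)) := hgc.comp_left Complex.ofReal_zero
    let G : 𝓢(ℝ, ℂ) := hgc'.toSchwartzMap hg'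
    have hG : ∀ x, G x = (g x : ℂ) := fun _ => rfl
    have h1 := congrArg (fun T => T G) (Lp.fourier_toTemperedDistribution_eq (hf₂.toLp f))
    simp only [TemperedDistribution.fourier_apply, Lp.toTemperedDistribution_apply] at h1
    have h2 : ∫ x, (𝓕 G) x • (hf₂.toLp f) x = ∫ x, 𝓕 (G : ℝ → ℂ) x • f x := by
      refine integral_congr_ae ?_
      filter_upwards [hf₂.coeFn_toLp] with x hx
      rw [hx, SchwartzMap.fourier_coe]
    have h3 : ∫ x, 𝓕 (G : ℝ → ℂ) x • f x = ∫ x, G x • 𝓕 f x := by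
      have := VectorFourier.integral_fourierIntegral_smul_eq_flip (L := innerₗ ℝ)
        (μ := (volume : Measure ℝ)) (ν := (volume : Measure ℝ))
        Real.continuous_fourierChar (by exact continuous_inner) (G.integrable (μ := volume)) hf
      rwa [flip_innerₗ] at this
    rw [h2, h3] at h1
    simpa [hG] using h1.symm
  rw [← eLpNorm_congr_ae key]
  have h := Lp.norm_fourier_eq (hf₂.toLp f)
  rw [Lp.norm_def, Lp.norm_def, ENNReal.toReal_eq_toReal_iff' (Lp.eLpNorm_ne_top _)
    (Lp.eLpNorm_ne_top _)] at h
  rw [h, eLpNorm_congr_ae hf₂.coeFn_toLp]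

end

section

/-- A monotone function whose averages over `[R, 2R]` tend to zero is nonpositive. -/
theorem nonpos_of_monotone_of_average {Φ g H H' E : ℝ → ℝ} {k : ℝ} (hmono : Monotone Φ)
    (hΦ : ∀ x, Φ x = k * (x * g x) + H' x + E x) (hg : ∀ x, 0 ≤ g x) (hgc : Continuous g)
    (hgi : Integrable g) (hH : ∀ x, HasDerivAt H (H' x) x) (hH'c : Continuous H')
    (hH0 : Tendsto (fun x => H x / x) atTop (𝓝 0)) (hEc : Continuous E)
    (hE0 : Tendsto E atTop (𝓝 0)) (a : ℝ) : Φ a ≤ 0 := by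
  have hg1 : Tendsto (fun R : ℝ => ∫ x in (0 : ℝ)..R, g x) atTop (𝓝 (∫ x in Ioi 0, g x)) :=
    intervalIntegral_tendsto_integral_Ioi 0 hgi.integrableOn tendsto_id
  have h2R : Tendsto (fun R : ℝ => 2 * R) atTop atTop := tendsto_id.const_mul_atTop two_pos
  have hg2 : Tendsto (fun R : ℝ => ∫ x in R..(2 * R), g x) atTop (𝓝 0) := by
    have h := (hg1.comp h2R).sub hg1
    rw [sub_self] at h
    refine h.congr fun R => ?_
    exact intervalIntegral.integral_interval_sub_left (hgc.intervalIntegrable _ _)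
      (hgc.intervalIntegrable _ _)
  have hbound : Tendsto (fun R : ℝ => |k| * 2 * (∫ x in R..(2 * R), g x)
      + (2 * |H (2 * R) / (2 * R)| + |H R / R|)) atTop (𝓝 0) := by
    have h := (hg2.const_mul (|k| * 2)).add (((hH0.comp h2R).abs.const_mul 2).add hH0.abs)
    simpa using h
  refine le_of_forall_pos_le_add fun η hη => ?_
  have e1 : ∀ᶠ R in atTop, ∀ x ≥ R, |E x| ≤ η / 2 := by
    have : ∀ᶠ x in atTop, |E x| ≤ η / 2 := by
      have := hE0.abs
      rw [abs_zero] at this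
      exact this.eventually_le_const (by positivity)
    exact eventually_forall_ge_atTop.2 this
  obtain ⟨R, hR1, hR2, hR3, hR4⟩ := (e1.and ((hbound.eventually_le_const
    (show (0 : ℝ) < η / 2 by positivity)).and
      ((eventually_ge_atTop a).and (eventually_ge_atTop 1)))).exists
  have hR : 0 < R := by linarith
  have hle : R ≤ 2 * R := by linarith
  have c1 : Continuous fun x => k * (x * g x) := by fun_prop
  have hΦc : Continuous Φ := by
    rw [show Φ = fun x => k * (x * g x) + H' x + E x from funext hΦ]
    fun_prop
  have s1 : R * Φ a ≤ ∫ x in R..(2 * R), Φ x := by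
    have := intervalIntegral.integral_mono_on hle (f := fun _ => Φ a)
      (μ := volume) (continuous_const.intervalIntegrable _ _)
      (hΦc.intervalIntegrable _ _) fun x hx => hmono (hR3.trans hx.1)
    simp only [intervalIntegral.integral_const, smul_eq_mul] at this
    linarith
  have s2 : ∫ x in R..(2 * R), Φ x = (∫ x in R..(2 * R), k * (x * g x))
      + (H (2 * R) - H R) + ∫ x in R..(2 * R), E x := by
    rw [← intervalIntegral.integral_eq_sub_of_hasDerivAt (fun x _ => hH x)
      (hH'c.intervalIntegrable _ _), ← intervalIntegral.integral_add (μ := volume)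
      (c1.intervalIntegrable _ _) (hH'c.intervalIntegrable _ _),
      ← intervalIntegral.integral_add (μ := volume) (f := fun x => k * (x * g x) + H' x)
      ((c1.add hH'c).intervalIntegrable _ _) (hEc.intervalIntegrable _ _)]
    exact intervalIntegral.integral_congr (μ := volume) fun x _ => hΦ x
  have s3 : ∫ x in R..(2 * R), k * (x * g x) ≤ R * (|k| * 2 * ∫ x in R..(2 * R), g x) := by
    have := intervalIntegral.integral_mono_on (μ := volume) hle (c1.intervalIntegrable _ _)
      (g := fun x => R * (|k| * 2) * g x)
      ((by fun_prop : Continuous fun x => R * (|k| * 2) * g x).intervalIntegrable _ _)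
      fun x hx => by
        have h1 : k * (x * g x) ≤ |k| * (x * g x) :=
          mul_le_mul_of_nonneg_right (le_abs_self k) (mul_nonneg (by linarith [hx.1]) (hg x))
        have h2 : |k| * (x * g x) ≤ |k| * (2 * R * g x) :=
          mul_le_mul_of_nonneg_left (mul_le_mul_of_nonneg_right hx.2 (hg x)) (abs_nonneg k)
        linarith
    simp only [intervalIntegral.integral_const_mul] at this ⊢
    linarith
  have s4 : H (2 * R) - H R ≤ R * (2 * |H (2 * R) / (2 * R)| + |H R / R|) := by
    have h1 : H (2 * R) ≤ 2 * R * |H (2 * R) / (2 * R)| := by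
      rw [abs_div, abs_of_pos (by positivity : 0 < 2 * R),
        mul_div_cancel₀ _ (by positivity : (2 * R) ≠ 0)]
      exact le_abs_self _
    have h2 : -H R ≤ R * |H R / R| := by
      rw [abs_div, abs_of_pos hR, mul_div_cancel₀ _ hR.ne']
      exact neg_le_abs _
    linarith
  have s5 : ∫ x in R..(2 * R), E x ≤ R * (η / 2) := by
    have := intervalIntegral.integral_mono_on (μ := volume) hle (g := fun _ => η / 2)
      (hEc.intervalIntegrable _ _) (continuous_const.intervalIntegrable _ _) fun x hx => (le_abs_self _).trans (hR1 x hx.1)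
    simp only [intervalIntegral.integral_const, smul_eq_mul] at this
    linarith
  have s6 := mul_le_mul_of_nonneg_left hR2 hR.le
  have : R * Φ a ≤ R * (0 + η) := by linarith
  exact le_of_mul_le_mul_left this hR

/-- Derivative of the weight `(1 + x²)^{-1/2}`. -/
theorem hasDerivAt_inv_sqrt_one_add_sq (x : ℝ) :
    HasDerivAt (fun y : ℝ => (√(1 + y ^ 2))⁻¹) (-x * (√(1 + x ^ 2))⁻¹ ^ 3) x := by
  have h0 : 0 < 1 + x ^ 2 := by positivity
  have h := (((hasDerivAt_pow 2 x).const_add 1).sqrt h0.ne').inv (Real.sqrt_pos.2 h0).ne'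
  refine h.congr_deriv ?_
  have := (Real.sqrt_pos.2 h0).ne'
  field_simp
  simp

/-- Pointwise lower bound for the derivative of the energy functional. -/
theorem energy_deriv_lower_bound {x D D₁ G q φ : ℝ} (hφ0 : 0 ≤ φ) (hφ1 : φ ≤ 1)
    (hxφ : |x| * φ ≤ 1) (hq : 2052 * q ^ 2 ≤ φ) :
    D ^ 2 * φ / 8 ≤
      (D * (D * φ) + G * (D₁ * φ + D * (-x * φ ^ 3)))
      + 1 / 12 * (D₁ * (D₁ * φ ^ 2) + D * ((x * D / 3 - q * D) * φ ^ 2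
        + D₁ * (2 * φ * (-x * φ ^ 3))))
      + 56 * (1 / 2 * G ^ 2 + G * (3 * q * D)) := by
  obtain ⟨hx1, hx2⟩ : -1 ≤ x * φ ∧ x * φ ≤ 1 := by
    have : |x * φ| ≤ 1 := by rwa [abs_mul, abs_of_nonneg hφ0]
    exact abs_le.1 this
  set y := x * φ with hy
  have hy2 : y ^ 2 ≤ 1 := by nlinarith
  have hφ2 : φ ^ 2 ≤ φ := by nlinarith
  have hφ4 : φ ^ 4 ≤ φ := by nlinarith
  have hD := sq_nonneg D
  have hqD : q ^ 2 * D ^ 2 * 2052 ≤ D ^ 2 * φ := by nlinarith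
  have a1 : -(G * (D₁ * φ)) ≤ D₁ ^ 2 * φ ^ 2 / 48 + 12 * G ^ 2 := by
    nlinarith [sq_nonneg (D₁ * φ + 24 * G)]
  have a2 : G * D * y * φ ^ 2 ≤ D ^ 2 * φ / 8 + 2 * G ^ 2 := by
    have : D ^ 2 * y ^ 2 * φ ^ 4 ≤ D ^ 2 * φ := by
      have := mul_le_mul hy2 hφ4 (by positivity) zero_le_one
      nlinarith
    nlinarith [sq_nonneg (D * y * φ ^ 2 - 4 * G)]
  have a3 : -(D ^ 2 * y * φ) ≤ D ^ 2 * φ := by nlinarith [mul_nonneg hD hφ0]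
  have a4 : q * D ^ 2 * φ ^ 2 ≤ D ^ 2 * φ / 2 + q ^ 2 * D ^ 2 / 2 := by
    have : φ ^ 2 * φ ^ 2 ≤ φ := by nlinarith
    nlinarith [mul_nonneg hD (sq_nonneg (φ ^ 2 - q))]
  have a5 : 2 * D * D₁ * y * φ ^ 3 ≤ D₁ ^ 2 * φ ^ 2 / 4 + 4 * (D ^ 2 * φ) := by
    have : D ^ 2 * y ^ 2 * φ ^ 4 ≤ D ^ 2 * φ := by
      have := mul_le_mul hy2 hφ4 (by positivity) zero_le_one
      nlinarith
    nlinarith [sq_nonneg (D₁ * φ - 4 * (D * y * φ ^ 2))]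
  have a6 : -(G * (3 * q * D)) ≤ G ^ 2 / 4 + 9 * (q ^ 2 * D ^ 2) := by
    nlinarith [sq_nonneg (G + 6 * q * D)]
  have hP : 0 ≤ D₁ ^ 2 * φ ^ 2 := by positivity
  have e1 : G * (D * (-x * φ ^ 3)) = -(G * D * y * φ ^ 2) := by rw [hy]; ring
  have e2 : D * (x * D / 3 * φ ^ 2) = D ^ 2 * y * φ / 3 := by rw [hy]; ring
  have e3 : D * (D₁ * (2 * φ * (-x * φ ^ 3))) = -(2 * D * D₁ * y * φ ^ 3) := by rw [hy]; ring
  have e4 : (D * (D * φ) + G * (D₁ * φ + D * (-x * φ ^ 3)))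
      + 1 / 12 * (D₁ * (D₁ * φ ^ 2) + D * ((x * D / 3 - q * D) * φ ^ 2
        + D₁ * (2 * φ * (-x * φ ^ 3))))
      + 56 * (1 / 2 * G ^ 2 + G * (3 * q * D))
      = D ^ 2 * φ + G * (D₁ * φ) + G * (D * (-x * φ ^ 3))
        + 1 / 12 * (D₁ ^ 2 * φ ^ 2 + D * (x * D / 3 * φ ^ 2) - q * D ^ 2 * φ ^ 2
          + D * (D₁ * (2 * φ * (-x * φ ^ 3))))
      + 56 * (1 / 2 * G ^ 2 + G * (3 * q * D)) := by ring
  rw [e4, e1, e2, e3]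
  linarith [mul_nonneg hD hφ0]

/-- A solution of `D'' = (x/3 - q) D` with small potential `q`, decaying at infinity and having a
square integrable primitive, vanishes. -/
theorem eq_zero_of_perturbed_airy {D D₁ G q : ℝ → ℝ} {K : ℝ} (hG : ∀ x, HasDerivAt G (D x) x)
    (hD : ∀ x, HasDerivAt D (D₁ x) x) (hD₁ : ∀ x, HasDerivAt D₁ (x * D x / 3 - q x * D x) x)
    (hq : ∀ x, 2052 * q x ^ 2 ≤ (√(1 + x ^ 2))⁻¹) (hK : ∀ x, |D x| ≤ K)
    (hD0 : Tendsto D (cocompact ℝ) (𝓝 0)) (hGi : Integrable fun x => G x ^ 2) (x : ℝ) :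
    D x = 0 := by
  set φ : ℝ → ℝ := fun y => (√(1 + y ^ 2))⁻¹ with hφdef
  have hφ' : ∀ x, HasDerivAt φ (-x * φ x ^ 3) x := hasDerivAt_inv_sqrt_one_add_sq
  have hsq1 : ∀ x : ℝ, 1 ≤ √(1 + x ^ 2) := fun x => Real.one_le_sqrt.2 (by nlinarith [sq_nonneg x])
  have hφpos : ∀ x, 0 < φ x := fun x => inv_pos.2 (by linarith [hsq1 x])
  have hφ1 : ∀ x, φ x ≤ 1 := fun x => inv_le_one_of_one_le₀ (hsq1 x)
  have hxφ : ∀ x, |x| * φ x ≤ 1 := fun x => by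
    rw [← div_eq_mul_inv, div_le_one (by linarith [hsq1 x])]
    exact Real.abs_le_sqrt (by linarith)
  have cG : Continuous G := continuous_iff_continuousAt.2 fun x => (hG x).continuousAt
  have cD : Continuous D := continuous_iff_continuousAt.2 fun x => (hD x).continuousAt
  have cD₁ : Continuous D₁ := continuous_iff_continuousAt.2 fun x => (hD₁ x).continuousAt
  have cφ : Continuous φ := continuous_iff_continuousAt.2 fun x => (hφ' x).continuousAt
  set Φ : ℝ → ℝ := fun x => G x * (D x * φ x) + 1 / 12 * (D x * (D₁ x * φ x ^ 2))
    + 56 * (1 / 2 * (x * G x ^ 2) - 3 * (G x * D₁ x) + 3 / 2 * D x ^ 2) with hΦdef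
  set H : ℝ → ℝ := fun x => 1 / 24 * (D x * φ x) ^ 2 - 168 * (G x * D x) with hHdef
  set H' : ℝ → ℝ := fun x => 1 / 12 * (D x * φ x) * (D₁ x * φ x + D x * (-x * φ x ^ 3))
    - 168 * (D x * D x + G x * D₁ x) with hH'def
  set E : ℝ → ℝ := fun x => G x * φ x * D x + (1 / 12 * (x * φ x) * φ x ^ 3 + 252) * D x ^ 2
    with hEdef
  have hΦ' : ∀ x, HasDerivAt Φ
      ((D x * (D x * φ x) + G x * (D₁ x * φ x + D x * (-x * φ x ^ 3)))
      + 1 / 12 * (D₁ x * (D₁ x * φ x ^ 2) + D x * ((x * D x / 3 - q x * D x) * φ x ^ 2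
        + D₁ x * (2 * φ x * (-x * φ x ^ 3))))
      + 56 * (1 / 2 * G x ^ 2 + G x * (3 * q x * D x))) x := by
    intro x
    have h1 := (hG x).mul ((hD x).mul (hφ' x))
    have h2 := ((hD x).mul ((hD₁ x).mul ((hφ' x).pow 2))).const_mul (1 / 12)
    have h3 := ((((hasDerivAt_id x).mul ((hG x).pow 2)).const_mul (1 / 2)).sub
      (((hG x).mul (hD₁ x)).const_mul 3)).add (((hD x).pow 2).const_mul (3 / 2))
    refine ((h1.add h2).add (h3.const_mul 56)).congr_deriv ?_
    simp only [Pi.pow_apply, Pi.mul_apply, id_eq]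
    push_cast
    ring
  have hlow : ∀ x, D x ^ 2 * φ x / 8 ≤ _ := fun x =>
    energy_deriv_lower_bound (D := D x) (D₁ := D₁ x) (G := G x) (hφpos x).le (hφ1 x) (hxφ x) (hq x)
  have hmono : Monotone Φ := monotone_of_hasDerivAt_nonneg hΦ' fun x =>
    le_trans (by have := hφpos x; positivity) (hlow x)
  have hH : ∀ x, HasDerivAt H (H' x) x := by
    intro x
    refine (((((hD x).mul (hφ' x)).pow 2).const_mul (1 / 24)).sub
      (((hG x).mul (hD x)).const_mul 168)).congr_deriv ?_
    simp only [Pi.mul_apply, hH'def]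
    push_cast
    ring
  have hdecomp : ∀ x, Φ x = 28 * (x * G x ^ 2) + H' x + E x := by
    intro x
    simp only [hΦdef, hH'def, hEdef]
    ring
  have cH' : Continuous H' := by fun_prop
  have cE : Continuous E := by fun_prop
  have hK0 : 0 ≤ K := (abs_nonneg _).trans (hK 0)
  obtain ⟨C, hC0, hC⟩ : ∃ C, 0 ≤ C ∧ ∀ x, |G x| ≤ C * (1 + |x|) := by
    refine ⟨|G 0| + K, by positivity, fun x => ?_⟩
    have h := Convex.norm_image_sub_le_of_norm_hasDerivWithin_le (s := univ) (f := G) (C := K)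
      (fun y _ => (hG y).hasDerivWithinAt) (fun y _ => hK y) convex_univ (mem_univ 0) (mem_univ x)
    simp only [Real.norm_eq_abs, sub_zero] at h
    have h1 : |G x| ≤ |G x - G 0| + |G 0| := by
      simpa using abs_add_le (G x - G 0) (G 0)
    nlinarith [abs_nonneg x, abs_nonneg (G 0), mul_nonneg (abs_nonneg (G 0)) (abs_nonneg x)]
  have hGφ : ∀ x, |G x * φ x| ≤ 2 * C := fun x => by
    rw [abs_mul, abs_of_pos (hφpos x)]
    calc |G x| * φ x ≤ C * (1 + |x|) * φ x := mul_le_mul_of_nonneg_right (hC x) (hφpos x).le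
      _ = C * (φ x + |x| * φ x) := by ring
      _ ≤ C * (1 + 1) := by gcongr; exacts [hφ1 x, hxφ x]
      _ = 2 * C := by ring
  have hE0 : Tendsto E (cocompact ℝ) (𝓝 0) := by
    have hb : Tendsto (fun x => 2 * C * |D x| + 253 * |D x| ^ 2) (cocompact ℝ) (𝓝 0) := by
      simpa using (hD0.abs.const_mul (2 * C)).add ((hD0.abs.pow 2).const_mul 253)
    refine squeeze_zero_norm (fun x => ?_) hb
    simp only [hEdef, Real.norm_eq_abs, sq_abs]
    refine (abs_add_le _ _).trans (add_le_add ?_ ?_)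
    · rw [abs_mul]
      exact mul_le_mul_of_nonneg_right (hGφ x) (abs_nonneg _)
    · rw [abs_mul, abs_of_nonneg (sq_nonneg (D x))]
      refine mul_le_mul_of_nonneg_right ((abs_add_le _ _).trans ?_) (sq_nonneg _)
      rw [abs_mul, abs_mul, abs_mul, abs_of_pos (hφpos x), abs_of_pos (pow_pos (hφpos x) 3)]
      have := mul_le_mul (hxφ x) (pow_le_one₀ (n := 3) (hφpos x).le (hφ1 x))
        (pow_nonneg (hφpos x).le 3) zero_le_one
      norm_num
      linarith
  have hH0 : Tendsto (fun x => H x / x) (cocompact ℝ) (𝓝 0) := by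
    have hb : Tendsto (fun x => |D x| ^ 2 + 336 * C * |D x|) (cocompact ℝ) (𝓝 0) := by
      simpa using (hD0.abs.pow 2).add (hD0.abs.const_mul (336 * C))
    have hx1 : ∀ᶠ x : ℝ in cocompact ℝ, 1 ≤ ‖x‖ :=
      (tendsto_norm_cocompact_atTop (E := ℝ)).eventually_ge_atTop 1
    refine squeeze_zero_norm' (hx1.mono fun x hx => ?_) hb
    rw [Real.norm_eq_abs] at hx
    rw [Real.norm_eq_abs, abs_div, div_le_iff₀ (by linarith)]
    have h1 : |H x| ≤ 1 / 24 * |D x * φ x| ^ 2 + 168 * (|G x| * |D x|) := by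
      refine (abs_sub _ _).trans (le_of_eq ?_)
      simp [abs_mul]
    have h2 : |D x * φ x| ≤ |D x| := by
      rw [abs_mul, abs_of_pos (hφpos x)]
      exact mul_le_of_le_one_right (abs_nonneg _) (hφ1 x)
    have h3 : |D x * φ x| ^ 2 ≤ |D x| ^ 2 := by gcongr
    have h4 : |G x| * |D x| ≤ C * (2 * |x|) * |D x| :=
      mul_le_mul_of_nonneg_right ((hC x).trans (by gcongr; linarith)) (abs_nonneg _)
    nlinarith [sq_nonneg (|D x|)]
  rw [cocompact_eq_atBot_atTop, tendsto_sup] at hE0 hH0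
  have hle : ∀ a, Φ a ≤ 0 := nonpos_of_monotone_of_average hmono hdecomp
    (fun x => sq_nonneg (G x)) (cG.pow 2) hGi hH cH' hH0.2 cE hE0.2
  have hge : ∀ a, 0 ≤ Φ a := by
    intro a
    have := nonpos_of_monotone_of_average (Φ := fun x => -Φ (-x)) (g := fun x => G (-x) ^ 2)
      (H := fun x => H (-x)) (H' := fun x => -H' (-x)) (E := fun x => -E (-x)) (k := 28)
      (fun x y hxy => neg_le_neg (hmono (neg_le_neg hxy)))
      (fun x => by rw [hdecomp]; ring) (fun x => sq_nonneg _) (by fun_prop) hGi.comp_neg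
      (fun x => by simpa [Function.comp_def] using (hH (-x)).comp x (hasDerivAt_neg x)) (by fun_prop)
      (by
        have := (hH0.1.comp tendsto_neg_atTop_atBot).neg
        simpa [Function.comp_def, div_neg] using this) (by fun_prop)
      (by simpa [Function.comp_def] using (hE0.1.comp tendsto_neg_atTop_atBot).neg) (-a)
    simpa using this
  have hzero : Φ = fun _ => 0 := funext fun a => le_antisymm (hle a) (hge a)
  have hd := hΦ' x
  rw [hzero] at hd
  have h0 := hd.unique (hasDerivAt_const x 0)
  have h1 := hlow x
  rw [h0] at h1
  have h2 : D x ^ 2 * φ x ≤ 0 := by linarith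
  have h3 : D x ^ 2 ≤ 0 := nonpos_of_mul_nonpos_left h2 (hφpos x)
  exact pow_eq_zero_iff two_ne_zero |>.1 (le_antisymm h3 (sq_nonneg _))

end

section

/-- A square integrable function with bounded derivative tends to zero at `+∞`. -/
theorem tendsto_zero_of_sq_integrable {G D : ℝ → ℝ} {K : ℝ} (hG : ∀ x, HasDerivAt G (D x) x)
    (hDc : Continuous D) (hK : ∀ x, |D x| ≤ K) (hGi : Integrable fun x => G x ^ 2) :
    Tendsto G atTop (𝓝 0) := by
  have hcube : ∀ x, HasDerivAt (fun y => G y ^ 3) (3 * (G x ^ 2 * D x)) x := fun x => by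
    refine ((hG x).pow 3).congr_deriv ?_
    push_cast
    ring
  have hint : Integrable fun x => 3 * (G x ^ 2 * D x) :=
    (hGi.mul_bdd hDc.aestronglyMeasurable (ae_of_all _ hK)).const_mul 3
  obtain ⟨L, hL⟩ : ∃ L, Tendsto (fun y => G y ^ 3) atTop (𝓝 L) :=
    ⟨_, tendsto_limUnder_of_hasDerivAt_of_integrableOn_Ioi (a := 0) (fun x _ => hcube x)
      hint.integrableOn⟩
  have hsq : Tendsto (fun y => G y ^ 2) atTop (𝓝 ((L ^ 2) ^ (1 / 3 : ℝ))) := by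
    refine ((hL.pow 2).rpow_const (p := 1 / 3) (Or.inr (by norm_num))).congr fun y => ?_
    rw [← pow_mul, show 3 * 2 = 2 * 3 by norm_num, pow_mul, ← Real.rpow_natCast _ 3,
      ← Real.rpow_mul (sq_nonneg _)]
    norm_num
  have h0 : (L ^ 2) ^ (1 / 3 : ℝ) = 0 :=
    (hGi.integrableAtFilter atTop).eq_zero_of_tendsto
      (fun s hs => by
        obtain ⟨a, ha⟩ := mem_atTop_sets.1 hs
        exact measure_mono_top (fun x hx => ha x hx) Real.volume_Ici) hsq
  rw [h0] at hsq
  refine (tendsto_zero_iff_abs_tendsto_zero _).2 ?_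
  have := hsq.sqrt
  simpa [Function.comp_def, Real.sqrt_sq_eq_abs] using this

/-- The constant in `D'' = x D / 3 - q D + β` is nonpositive if `D` tends to zero and has a square
integrable primitive. -/
theorem const_nonpos_of_sq_integrable {D D₁ G q : ℝ → ℝ} {K β : ℝ}
    (hG : ∀ x, HasDerivAt G (D x) x) (hD : ∀ x, HasDerivAt D (D₁ x) x)
    (hD₁ : ∀ x, HasDerivAt D₁ (x * D x / 3 - q x * D x + β) x) (hq : ∀ x, |q x| ≤ 1)
    (hK : ∀ x, |D x| ≤ K) (hD0 : Tendsto D atTop (𝓝 0)) (hGi : Integrable fun x => G x ^ 2) :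
    β ≤ 0 := by
  by_contra! hβ
  have hDc : Continuous D := continuous_iff_continuousAt.2 fun x => (hD x).continuousAt
  have hG0 := tendsto_zero_of_sq_integrable hG hDc hK hGi
  have e1 : ∀ᶠ x in atTop, |G x| ≤ β / 4 :=
    (by simpa using hG0.abs : Tendsto _ _ (𝓝 (0 : ℝ))).eventually_le_const (by positivity)
  have e2 : ∀ᶠ x in atTop, |D x| ≤ β / 4 :=
    (by simpa using hD0.abs : Tendsto _ _ (𝓝 (0 : ℝ))).eventually_le_const (by positivity)
  obtain ⟨M, hM⟩ := eventually_atTop.1 (e1.and (e2.and (eventually_ge_atTop 0)))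
  set P : ℝ → ℝ := fun x => D₁ x - x * G x / 3 with hP
  have hP' : ∀ x, HasDerivAt P (β - q x * D x - G x / 3) x := fun x => by
    refine ((hD₁ x).sub (((hasDerivAt_id x).mul (hG x)).div_const 3)).congr_deriv ?_
    simp only [id_eq]
    ring
  have hPlow : ∀ x, M ≤ x → β / 2 * (x - M) ≤ P x - P M := fun x hx => by
    refine Convex.mul_sub_le_image_sub_of_le_deriv (convex_Ici M)
      (fun y _ => (hP' y).continuousAt.continuousWithinAt)
      (fun y _ => (hP' y).differentiableAt.differentiableWithinAt) (fun y hy => ?_)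
      M self_mem_Ici x hx hx
    rw [interior_Ici] at hy
    rw [(hP' y).deriv]
    obtain ⟨h1, h2, -⟩ := hM y hy.le
    have h3 : |q y * D y| ≤ β / 4 := by
      rw [abs_mul]
      nlinarith [hq y, abs_nonneg (D y), abs_nonneg (q y)]
    linarith [le_abs_self (q y * D y), le_abs_self (G y)]
  obtain ⟨N, hN⟩ : ∃ N, M ≤ N ∧ ∀ x, N ≤ x → 1 ≤ D₁ x := by
    refine ⟨max M ((1 - P M + β / 2 * M) / (β / 4)), le_max_left _ _, fun x hx => ?_⟩
    have hx1 := (le_max_left _ _).trans hx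
    have hx2 := (div_le_iff₀ (by positivity)).1 ((le_max_right _ _).trans hx)
    obtain ⟨h1, -, h3⟩ := hM x hx1
    have h4 := hPlow x hx1
    have h5 : -(x * (β / 4)) ≤ x * G x := by nlinarith [neg_abs_le (G x)]
    have h6 : D₁ x = P x + x * G x / 3 := by rw [hP]; ring
    nlinarith
  have hDlow : 1 * ((N + (2 * K + 1)) - N) ≤ D (N + (2 * K + 1)) - D N := by
    have hK0 : 0 ≤ K := (abs_nonneg _).trans (hK 0)
    refine Convex.mul_sub_le_image_sub_of_le_deriv (convex_Ici N)
      (fun y _ => (hD y).continuousAt.continuousWithinAt)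
      (fun y _ => (hD y).differentiableAt.differentiableWithinAt) (fun y hy => ?_)
      N self_mem_Ici _ (by simp only [mem_Ici]; linarith) (by linarith)
    rw [interior_Ici] at hy
    rw [(hD y).deriv]
    exact hN.2 y hy.le
  linarith [(abs_le.1 (hK (N + (2 * K + 1)))).2, (abs_le.1 (hK N)).1]

theorem const_eq_zero_of_sq_integrable {D D₁ G q : ℝ → ℝ} {K β : ℝ}
    (hG : ∀ x, HasDerivAt G (D x) x) (hD : ∀ x, HasDerivAt D (D₁ x) x)
    (hD₁ : ∀ x, HasDerivAt D₁ (x * D x / 3 - q x * D x + β) x) (hq : ∀ x, |q x| ≤ 1)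
    (hK : ∀ x, |D x| ≤ K) (hD0 : Tendsto D atTop (𝓝 0)) (hGi : Integrable fun x => G x ^ 2) :
    β = 0 := by
  refine le_antisymm (const_nonpos_of_sq_integrable hG hD hD₁ hq hK hD0 hGi) ?_
  have := const_nonpos_of_sq_integrable (β := -β) (D := -D) (D₁ := -D₁) (G := -G) (fun x => (hG x).neg) (fun x => (hD x).neg)
    (fun x => (hD₁ x).neg.congr_deriv (by simp only [Pi.neg_apply]; ring)) hq
    (fun x => by simpa using hK x)
    (neg_zero (G := ℝ) ▸ hD0.neg) (by simpa using hGi)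
  linarith

end

section

/-- The oscillating factor `e^{i(px + p³)}`. -/
noncomputable def airyPhase (x p : ℝ) : ℂ := Complex.exp (Complex.I * ((p * x + p ^ 3 * 1 : ℝ) : ℂ))

theorem norm_airyPhase (x p : ℝ) : ‖airyPhase x p‖ = 1 := by
  rw [airyPhase, mul_comm, Complex.norm_exp_ofReal_mul_I]

theorem hasDerivAt_airyPhase (x p : ℝ) :
    HasDerivAt (airyPhase x) (airyPhase x p * (Complex.I * ((x + 3 * p ^ 2 : ℝ) : ℂ))) p := by
  have h : HasDerivAt (fun p : ℝ => p * x + p ^ 3 * 1) (x + 3 * p ^ 2) p := by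
    refine (((hasDerivAt_id p).mul_const x).add ((hasDerivAt_pow 3 p).mul_const 1)).congr_deriv ?_
    push_cast
    ring
  exact ((h.ofReal_comp).const_mul Complex.I).cexp

/-- A profile of size at most `δ`: bounded by `δ` on `(0,∞)`, with derivative of `L²` norm at
most `δ`. -/
structure ProfileBound (w : ℝ → ℂ) (δ : ℝ) : Prop where
  pos : 0 < δ
  diff : ∀ p, 0 < p → DifferentiableAt ℝ w p
  bound : ∀ p, 0 < p → ‖w p‖ ≤ δ
  integrable : IntegrableOn (fun p => ‖deriv w p‖ ^ 2) (Ioi 0)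
  integral_le : ∫ p in Ioi 0, ‖deriv w p‖ ^ 2 ≤ δ ^ 2

variable {w : ℝ → ℂ} {δ : ℝ}

theorem ProfileBound.intervalIntegrable (hw : ProfileBound w δ) (x : ℝ) {a b : ℝ} (ha : 0 ≤ a)
    (hb : 0 ≤ b) : IntervalIntegrable (fun p => airyPhase x p * w p) volume a b := by
  have key : ∀ a b : ℝ, 0 ≤ a → IntegrableOn (fun p => airyPhase x p * w p) (Ioc a b) := by
    intro a b ha
    refine Integrable.mono' (g := fun _ => δ) (by simp) ?_ ?_
    · refine ContinuousOn.aestronglyMeasurable (fun p hp => ?_) measurableSet_Ioc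
      exact ((hasDerivAt_airyPhase x p).continuousAt.mul
        (hw.diff p (ha.trans_lt hp.1)).continuousAt).continuousWithinAt
    · refine (ae_restrict_iff' measurableSet_Ioc).2 (ae_of_all _ fun p hp => ?_)
      rw [norm_mul, norm_airyPhase, one_mul]
      exact hw.bound p (ha.trans_lt hp.1)
  exact ⟨key a b ha, key b a hb⟩

theorem ProfileBound.norm_integral_le (hw : ProfileBound w δ) (x : ℝ) {a b : ℝ} (ha : 0 ≤ a)
    (hab : a ≤ b) : ‖∫ p in a..b, airyPhase x p * w p‖ ≤ δ * (b - a) := by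
  have := intervalIntegral.norm_integral_le_of_norm_le_const (a := a) (b := b) (C := δ)
    (f := fun p => airyPhase x p * w p) fun p hp => by
      rw [uIoc_of_le hab] at hp
      rw [norm_mul, norm_airyPhase, one_mul]
      exact hw.bound p (ha.trans_lt hp.1)
  rwa [abs_of_nonneg (by linarith)] at this

theorem ProfileBound.intervalIntegrable_deriv (hw : ProfileBound w δ) {a b : ℝ} (ha : 0 ≤ a)
    (hab : a ≤ b) : IntervalIntegrable (deriv w) volume a b := by
  rw [intervalIntegrable_iff_integrableOn_Ioc_of_le hab]
  have h1 : IntegrableOn (fun p => ‖deriv w p‖ ^ 2 + 1) (Ioc a b) :=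
    (hw.integrable.mono_set fun p hp => ha.trans_lt hp.1).add (by simp)
  refine h1.mono' (measurable_deriv w).aestronglyMeasurable (ae_of_all _ fun p => ?_)
  nlinarith [sq_nonneg (‖deriv w p‖ - 1), norm_nonneg (deriv w p)]

/-- Nonstationary phase estimate: on an interval at distance at least `r` from `c`, on which the
derivative of the phase is at least `|p - c| / r²`. -/
theorem ProfileBound.norm_integral_le_of_nonstationary (hw : ProfileBound w δ) {x a b c r : ℝ}
    (ha : 0 < a) (hab : a ≤ b) (hr : 0 < r) (hr1 : r ≤ 1) (hc : ∀ p ∈ Icc a b, r ≤ |p - c|)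
    (hx : ∀ p ∈ Icc a b, |p - c| ≤ r ^ 2 * |x + 3 * p ^ 2|) :
    ‖∫ p in a..b, airyPhase x p * w p‖ ≤ 6 * δ * r := by
  have hδ := hw.pos
  set f : ℝ → ℝ := fun p => x + 3 * p ^ 2 with hf
  have hfc : Continuous f := by fun_prop
  have hlow : ∀ p ∈ Icc a b, 1 ≤ r * |f p| := fun p hp => by
    have h1 := (hc p hp).trans (hx p hp)
    have : r * 1 ≤ r * (r * |f p|) := by simpa [hf, sq, mul_assoc] using h1
    exact le_of_mul_le_mul_left this hr
  have hf0 : ∀ p ∈ Icc a b, f p ≠ 0 := fun p hp h0 => by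
    have := hlow p hp
    rw [h0] at this
    norm_num at this
  have hinv : ∀ p ∈ Icc a b, |(f p)⁻¹| ≤ r := fun p hp => by
    rw [abs_inv]
    exact (inv_le_iff_one_le_mul₀ (abs_pos.2 (hf0 p hp))).2 (hlow p hp)
  have hcont_inv : ContinuousOn (fun p => (f p)⁻¹) (Icc a b) :=
    hfc.continuousOn.inv₀ hf0
  have haI : a ∈ Icc a b := left_mem_Icc.2 hab
  have hbI : b ∈ Icc a b := right_mem_Icc.2 hab
  have huIcc : uIcc a b = Icc a b := uIcc_of_le hab
  have hpos : ∀ p ∈ Icc a b, 0 < p := fun p hp => ha.trans_le hp.1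
  have hfd : ∀ p, HasDerivAt f (6 * p) p := fun p => by
    refine (((hasDerivAt_pow 2 p).const_mul 3).const_add x).congr_deriv ?_
    push_cast
    ring
  have hinvd : ∀ p ∈ Icc a b, HasDerivAt (fun p => (f p)⁻¹) (-(6 * p) / f p ^ 2) p :=
    fun p hp => (hfd p).inv (hf0 p hp)
  -- the primitive used in the integration by parts
  set F : ℝ → ℂ := fun p => -Complex.I * (airyPhase x p * (w p * (((f p)⁻¹ : ℝ) : ℂ))) with hF
  set u : ℝ → ℂ := fun p => airyPhase x p * (deriv w p * (((f p)⁻¹ : ℝ) : ℂ)) with hu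
  set v : ℝ → ℂ := fun p => airyPhase x p * (w p * ((-(6 * p) / f p ^ 2 : ℝ) : ℂ)) with hv
  have hFd : ∀ p ∈ uIcc a b, HasDerivAt F
      (airyPhase x p * w p + (-Complex.I * u p + -Complex.I * v p)) p := by
    intro p hp
    rw [huIcc] at hp
    have h1 := ((hasDerivAt_airyPhase x p).mul ((hw.diff p (hpos p hp)).hasDerivAt.mul
      (hinvd p hp).ofReal_comp)).const_mul (-Complex.I)
    refine h1.congr_deriv ?_
    have h0 : ((f p : ℝ) : ℂ) ≠ 0 := Complex.ofReal_ne_zero.2 (hf0 p hp)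
    have hI : Complex.I ^ 2 = -1 := Complex.I_sq
    have hfp : ((x + 3 * p ^ 2 : ℝ) : ℂ) = ((f p : ℝ) : ℂ) := rfl
    simp only [hu, hv, Pi.mul_apply, hfp]
    have h2 : airyPhase x p * (Complex.I * (f p : ℂ)) * (w p * (((f p)⁻¹ : ℝ) : ℂ))
        = Complex.I * (airyPhase x p * w p) := by
      push_cast
      field_simp
    rw [h2]
    linear_combination (-(airyPhase x p * w p)) * hI
  have hcph : Continuous (airyPhase x) :=
    continuous_iff_continuousAt.2 fun p => (hasDerivAt_airyPhase x p).continuousAt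
  have hcw : ContinuousOn w (Icc a b) := fun p hp =>
    (hw.diff p (hpos p hp)).continuousAt.continuousWithinAt
  have hci : ContinuousOn (fun p => (((f p)⁻¹ : ℝ) : ℂ)) (Icc a b) :=
    Complex.continuous_ofReal.comp_continuousOn hcont_inv
  have hcd : ContinuousOn (fun p => -(6 * p) / f p ^ 2) (Icc a b) :=
    ContinuousOn.div (by fun_prop) (by fun_prop) fun p hp => pow_ne_zero 2 (hf0 p hp)
  have hui : IntervalIntegrable u volume a b := by
    have h1 := (hw.intervalIntegrable_deriv ha.le hab).mul_continuousOn
      (hci.congr_mono (fun _ _ => rfl) huIcc.subset)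
    exact h1.continuousOn_mul hcph.continuousOn
  have hvi : IntervalIntegrable v volume a b := by
    refine ContinuousOn.intervalIntegrable ?_
    rw [huIcc]
    exact hcph.continuousOn.mul (hcw.mul (Complex.continuous_ofReal.comp_continuousOn hcd))
  have hmain := hw.intervalIntegrable x ha.le (ha.le.trans hab)
  have hFTC := intervalIntegral.integral_eq_sub_of_hasDerivAt hFd
    (hmain.add ((hui.const_mul _).add (hvi.const_mul _)))
  rw [intervalIntegral.integral_add hmain ((hui.const_mul _).add (hvi.const_mul _)),
    intervalIntegral.integral_add (hui.const_mul _) (hvi.const_mul _),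
    intervalIntegral.integral_const_mul, intervalIntegral.integral_const_mul] at hFTC
  have hFn : ∀ p ∈ Icc a b, ‖F p‖ ≤ δ * r := fun p hp => by
    simp only [hF, norm_mul, norm_neg, Complex.norm_I, one_mul, norm_airyPhase, Complex.norm_real,
      Real.norm_eq_abs]
    exact mul_le_mul (hw.bound p (hpos p hp)) (hinv p hp) (abs_nonneg _) hδ.le
  have hun : ‖∫ p in a..b, u p‖ ≤ 3 / 2 * (δ * r) := by
    have hs0 : ∀ p ∈ Icc a b, p - c ≠ 0 := fun p hp h0 => by
      have := hc p hp
      rw [h0, abs_zero] at this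
      linarith
    have hle : ∀ p ∈ Icc a b, ‖u p‖ ≤
        r / (2 * δ) * ‖deriv w p‖ ^ 2 + r ^ 3 * δ / 2 * (1 / (p - c) ^ 2) := fun p hp => by
      simp only [hu, norm_mul, norm_airyPhase, one_mul, Complex.norm_real, Real.norm_eq_abs]
      have h1 : |(f p)⁻¹| ≤ r ^ 2 * |p - c|⁻¹ := by
        rw [abs_inv, ← div_eq_mul_inv, le_div_iff₀ (abs_pos.2 (hs0 p hp)),
          inv_mul_le_iff₀ (abs_pos.2 (hf0 p hp))]
        linarith [hx p hp]
      have h2 : ‖deriv w p‖ * |(f p)⁻¹| ≤ ‖deriv w p‖ * (r ^ 2 * |p - c|⁻¹) :=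
        mul_le_mul_of_nonneg_left h1 (norm_nonneg _)
      have h3 : (1 / (p - c) ^ 2) = (|p - c|⁻¹) ^ 2 := by
        rw [inv_pow, sq_abs, one_div]
      rw [h3]
      refine h2.trans ?_
      have h4 : 0 ≤ r / (2 * δ) * (‖deriv w p‖ - δ * (r * |p - c|⁻¹)) ^ 2 := by positivity
      have h5 : r / (2 * δ) * (‖deriv w p‖ - δ * (r * |p - c|⁻¹)) ^ 2
        = r / (2 * δ) * ‖deriv w p‖ ^ 2 + r ^ 3 * δ / 2 * (|p - c|⁻¹) ^ 2
          - ‖deriv w p‖ * (r ^ 2 * |p - c|⁻¹) := by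
        field_simp
        ring
      linarith
    have hd2 : IntervalIntegrable (fun p => ‖deriv w p‖ ^ 2) volume a b := by
      rw [intervalIntegrable_iff_integrableOn_Ioc_of_le hab]
      exact hw.integrable.mono_set fun p hp => ha.trans hp.1
    have hd3 : IntervalIntegrable (fun p => 1 / (p - c) ^ 2) volume a b := by
      refine ContinuousOn.intervalIntegrable ?_
      rw [huIcc]
      exact ContinuousOn.div (by fun_prop) (by fun_prop) fun p hp => pow_ne_zero 2 (hs0 p hp)
    have h1 := intervalIntegral.norm_integral_le_of_norm_le hab
      (ae_of_all _ fun p hp => hle p (Ioc_subset_Icc_self hp))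
      ((hd2.const_mul (r / (2 * δ))).add (hd3.const_mul (r ^ 3 * δ / 2)))
    refine h1.trans ?_
    rw [intervalIntegral.integral_add (hd2.const_mul _) (hd3.const_mul _),
      intervalIntegral.integral_const_mul, intervalIntegral.integral_const_mul]
    have h2 : ∫ p in a..b, ‖deriv w p‖ ^ 2 ≤ δ ^ 2 := by
      rw [intervalIntegral.integral_of_le hab]
      refine (setIntegral_mono_set hw.integrable (ae_of_all _ fun p => by positivity)
        (Eventually.of_forall fun p hp => ?_)).trans hw.integral_le
      exact ha.trans hp.1
    have h3 : ∫ p in a..b, 1 / (p - c) ^ 2 ≤ 2 * r⁻¹ := by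
      rw [intervalIntegral.integral_eq_sub_of_hasDerivAt (f := fun p => -(p - c)⁻¹)
        (fun p hp => ?_) hd3]
      · have hh : ∀ p ∈ Icc a b, |(p - c)⁻¹| ≤ r⁻¹ := fun p hp => by
          rw [abs_inv]
          exact inv_anti₀ hr (hc p hp)
        linarith [(abs_le.1 (hh a haI)).2, (abs_le.1 (hh b hbI)).1]
      · rw [huIcc] at hp
        refine (((hasDerivAt_id p).sub_const c).inv (hs0 p hp)).neg.congr_deriv ?_
        simp only [id]
        ring
    calc r / (2 * δ) * (∫ p in a..b, ‖deriv w p‖ ^ 2)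
          + r ^ 3 * δ / 2 * ∫ p in a..b, 1 / (p - c) ^ 2
        ≤ r / (2 * δ) * δ ^ 2 + r ^ 3 * δ / 2 * (2 * r⁻¹) := by gcongr
      _ = r * δ / 2 + r * (r * δ) := by field_simp
      _ ≤ r * δ / 2 + 1 * (r * δ) := by gcongr
      _ = 3 / 2 * (δ * r) := by ring
  have hvn : ‖∫ p in a..b, v p‖ ≤ 2 * (δ * r) := by
    have hi2 : IntervalIntegrable (fun p => δ * -(-(6 * p) / f p ^ 2)) volume a b := by
      refine ContinuousOn.intervalIntegrable ?_
      rw [huIcc]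
      exact (hcd.neg).const_mul δ |>.congr fun _ _ => rfl
    refine (intervalIntegral.norm_integral_le_of_norm_le hab
      (ae_of_all _ fun p hp => ?_) hi2).trans ?_
    · have hp' := Ioc_subset_Icc_self hp
      simp only [hv, norm_mul, norm_airyPhase, one_mul, Complex.norm_real, Real.norm_eq_abs]
      have h1 : |-(6 * p) / f p ^ 2| = -(-(6 * p) / f p ^ 2) := by
        refine abs_of_nonpos ?_
        have := hpos p hp'
        rw [neg_div]
        exact neg_nonpos.2 (by positivity)
      rw [h1, ← h1]
      exact mul_le_mul_of_nonneg_right (hw.bound p (hpos p hp')) (abs_nonneg _)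
    · rw [intervalIntegral.integral_const_mul, intervalIntegral.integral_neg,
        intervalIntegral.integral_eq_sub_of_hasDerivAt (f := fun p => (f p)⁻¹)
          (fun p hp => hinvd p (huIcc ▸ hp)) (ContinuousOn.intervalIntegrable (huIcc.symm ▸ hcd))]
      have h1 := (abs_le.1 (hinv a haI)).2
      have h2 := (abs_le.1 (hinv b hbI)).1
      nlinarith
  have hval : ∫ p in a..b, airyPhase x p * w p
      = F b - F a + Complex.I * (∫ p in a..b, u p) + Complex.I * ∫ p in a..b, v p := by
    linear_combination hFTC
  rw [hval]
  calc _ ≤ ‖F b - F a + Complex.I * ∫ p in a..b, u p‖ + ‖Complex.I * ∫ p in a..b, v p‖ :=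
        norm_add_le _ _
    _ ≤ ‖F b - F a‖ + ‖Complex.I * ∫ p in a..b, u p‖ + ‖Complex.I * ∫ p in a..b, v p‖ := by
        gcongr
        exact norm_add_le _ _
    _ ≤ (‖F b‖ + ‖F a‖) + ‖Complex.I * ∫ p in a..b, u p‖ + ‖Complex.I * ∫ p in a..b, v p‖ := by
        gcongr
        exact norm_sub_le _ _
    _ = (‖F b‖ + ‖F a‖) + ‖∫ p in a..b, u p‖ + ‖∫ p in a..b, v p‖ := by
        simp only [norm_mul, Complex.norm_I, one_mul]
    _ ≤ 6 * δ * r := by nlinarith [hFn b hbI, hFn a haI, mul_pos hδ hr]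

end

section

variable {w : ℝ → ℂ} {δ : ℝ}

theorem abs_sub_le_mul_abs_phase_deriv {x p₀ r p : ℝ} (hp₀ : 0 ≤ p₀) (hx : |x| = 3 * p₀ ^ 2)
    (hr : 0 < r) (hr2 : r ^ 2 * (1 + p₀) = 1) (hp : 0 ≤ p) (hd : r ≤ |p - p₀|) :
    |p - p₀| ≤ r ^ 2 * |x + 3 * p ^ 2| := by
  have hs : |p - p₀| ≤ p + p₀ := abs_le.2 ⟨by linarith, by linarith⟩
  have h1 : 1 + p₀ ≤ 3 * (p + p₀) := by
    by_cases h : 1 / 2 ≤ p₀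
    · linarith
    · have : 1 / 2 ≤ r := by
        by_contra h'
        push Not at h h'
        nlinarith
      linarith
  have h2 : 3 * (|p - p₀| * (p + p₀)) ≤ |x + 3 * p ^ 2| := by
    have h3 : |p - p₀| * (p + p₀) = |p ^ 2 - p₀ ^ 2| := by
      rw [show p ^ 2 - p₀ ^ 2 = (p - p₀) * (p + p₀) by ring, abs_mul, abs_of_nonneg (a := p + p₀)
        (by linarith)]
    rw [h3]
    rcases abs_cases x with ⟨h4, _⟩ | ⟨h4, _⟩
    · have : |p ^ 2 - p₀ ^ 2| ≤ p ^ 2 + p₀ ^ 2 := abs_le.2 ⟨by nlinarith, by nlinarith⟩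
      exact le_trans (by linarith) (le_abs_self _)
    · rw [show x + 3 * p ^ 2 = 3 * (p ^ 2 - p₀ ^ 2) by linarith, abs_mul, abs_of_pos (three_pos (α := ℝ))]
  calc |p - p₀| = r ^ 2 * (|p - p₀| * (1 + p₀)) := by linear_combination -|p - p₀| * hr2
    _ ≤ r ^ 2 * (|p - p₀| * (3 * (p + p₀))) := by gcongr
    _ = r ^ 2 * (3 * (|p - p₀| * (p + p₀))) := by ring
    _ ≤ _ := by gcongr

/-- Decay estimate for the truncated oscillatory integral. -/
theorem ProfileBound.norm_integral_le_decay (hw : ProfileBound w δ) {x p₀ r R : ℝ} (hp₀ : 0 ≤ p₀)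
    (hx : |x| = 3 * p₀ ^ 2) (hr : 0 < r) (hr2 : r ^ 2 * (1 + p₀) = 1) (hR : 0 ≤ R) :
    ‖∫ p in (0 : ℝ)..R, airyPhase x p * w p‖ ≤ 15 * δ * r := by
  have hδ := hw.pos
  have hr1 : r ≤ 1 := by nlinarith
  have outer : ∀ a b : ℝ, 0 < a → a ≤ b → (∀ p ∈ Icc a b, r ≤ |p - p₀|) →
      ‖∫ p in a..b, airyPhase x p * w p‖ ≤ 6 * δ * r := fun a b ha hab h =>
    hw.norm_integral_le_of_nonstationary ha hab hr hr1 h fun p hp =>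
      abs_sub_le_mul_abs_phase_deriv hp₀ hx hr hr2 (ha.le.trans hp.1) (h p hp)
  set t₁ := min R r with ht₁
  set t₂ := min R (max r (p₀ - r)) with ht₂
  set t₃ := min R (p₀ + r) with ht₃
  have h01 : 0 ≤ t₁ := le_min hR hr.le
  have h12 : t₁ ≤ t₂ := min_le_min_left _ (le_max_left _ _)
  have h23 : t₂ ≤ t₃ := min_le_min_left _ (max_le (by linarith) (by linarith))
  have h3R : t₃ ≤ R := min_le_left _ _
  have hi := fun {a b : ℝ} (ha : 0 ≤ a) (hb : 0 ≤ b) => hw.intervalIntegrable x ha hb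
  have e1 : ‖∫ p in (0 : ℝ)..t₁, airyPhase x p * w p‖ ≤ δ * r :=
    (hw.norm_integral_le x le_rfl h01).trans (by
      have : t₁ ≤ r := min_le_right _ _
      gcongr
      linarith)
  have e2 : ‖∫ p in t₁..t₂, airyPhase x p * w p‖ ≤ 6 * δ * r := by
    rcases h12.eq_or_lt with h | h
    · rw [h]
      simp only [intervalIntegral.integral_same, norm_zero]
      positivity
    · have hrR : r ≤ R := by
        by_contra hh
        push Not at hh
        have : t₁ = R := min_eq_left hh.le
        have : t₂ ≤ R := min_le_left _ _
        linarith
      have h1r : t₁ = r := min_eq_right hrR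
      have h2 : t₂ ≤ max r (p₀ - r) := min_le_right _ _
      have h3 : t₂ ≤ p₀ - r := by
        rcases le_max_iff.1 h2 with h4 | h4
        · linarith
        · exact h4
      refine outer _ _ (h1r ▸ hr) h12 fun p hp => ?_
      rw [abs_sub_comm]
      exact le_trans (by linarith [hp.2]) (le_abs_self _)
  have e3 : ‖∫ p in t₂..t₃, airyPhase x p * w p‖ ≤ δ * (2 * r) :=
    (hw.norm_integral_le x (h01.trans h12) h23).trans (by
      gcongr
      rcases min_choice R (max r (p₀ - r)) with h | h
      · have : t₂ = R := h
        linarith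
      · have : t₂ = max r (p₀ - r) := h
        have h5 : t₃ ≤ p₀ + r := min_le_right _ _
        linarith [le_max_right r (p₀ - r)])
  have e4 : ‖∫ p in t₃..R, airyPhase x p * w p‖ ≤ 6 * δ * r := by
    rcases h3R.eq_or_lt with h | h
    · rw [h]
      simp only [intervalIntegral.integral_same, norm_zero]
      positivity
    · have h3 : t₃ = p₀ + r := by
        rcases min_choice R (p₀ + r) with h' | h'
        · exact absurd h' h.ne
        · exact h'
      refine outer _ _ (by linarith) h3R fun p hp => ?_
      exact le_trans (by linarith [hp.1]) (le_abs_self _)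
  have h02 := h01.trans h12
  have h03 := h02.trans h23
  rw [← intervalIntegral.integral_add_adjacent_intervals (hi le_rfl h03) (hi h03 hR),
    ← intervalIntegral.integral_add_adjacent_intervals (hi le_rfl h02) (hi h02 h03),
    ← intervalIntegral.integral_add_adjacent_intervals (hi le_rfl h01) (hi h01 h02)]
  refine (norm_add_le _ _).trans ?_
  refine (add_le_add_left (norm_add_le _ _) _).trans ?_
  refine (add_le_add_left (add_le_add_left (norm_add_le _ _) _) _).trans ?_
  linarith

/-- Decay rate `⟨x⟩^{-1/4}` of the Airy function, in the form `(1 + √(|x|/3))^{-1/2}`. -/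
noncomputable def airyDecay (x : ℝ) : ℝ := √((1 + √(|x| / 3))⁻¹)

theorem airyDecay_sq (x : ℝ) : airyDecay x ^ 2 = (1 + √(|x| / 3))⁻¹ :=
  Real.sq_sqrt (by positivity)

theorem airyDecay_pos (x : ℝ) : 0 < airyDecay x := Real.sqrt_pos.2 (by positivity)

theorem airyDecay_le_one (x : ℝ) : airyDecay x ≤ 1 := by
  have h := airyDecay_sq x
  have h1 : (1 + √(|x| / 3))⁻¹ ≤ 1 := inv_le_one_of_one_le₀ (by linarith [Real.sqrt_nonneg (|x| / 3)])
  nlinarith [airyDecay_pos x]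

theorem tendsto_airyDecay : Tendsto airyDecay (cocompact ℝ) (𝓝 0) := by
  have h1 : Tendsto (fun x : ℝ => 1 + √(|x| / 3)) (cocompact ℝ) atTop :=
    tendsto_atTop_add_const_left _ _ (Real.tendsto_sqrt_atTop.comp
      ((tendsto_norm_cocompact_atTop (E := ℝ)).atTop_div_const three_pos))
  have h2 := (Real.continuous_sqrt.tendsto 0).comp (tendsto_inv_atTop_zero.comp h1)
  rwa [Real.sqrt_zero] at h2

theorem airyDecay_pow_four_le (x : ℝ) : airyDecay x ^ 4 ≤ 3 * (√(1 + x ^ 2))⁻¹ := by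
  have h1 : √(1 + x ^ 2) ≤ 1 + |x| := by
    rw [Real.sqrt_le_left (by positivity)]
    nlinarith [sq_abs x, abs_nonneg x]
  have h2 : √(|x| / 3) ^ 2 = |x| / 3 := Real.sq_sqrt (by positivity)
  have h3 := Real.sqrt_nonneg (|x| / 3)
  have h4 : 0 < √(1 + x ^ 2) := Real.sqrt_pos.2 (by positivity)
  rw [show airyDecay x ^ 4 = (airyDecay x ^ 2) ^ 2 by ring, airyDecay_sq, ← div_eq_mul_inv, inv_pow,
    inv_le_comm₀ (by positivity) (by positivity), inv_div, div_le_iff₀ three_pos]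
  nlinarith

theorem ProfileBound.norm_integral_le_airyDecay (hw : ProfileBound w δ) (x : ℝ) {R : ℝ}
    (hR : 0 ≤ R) : ‖∫ p in (0 : ℝ)..R, airyPhase x p * w p‖ ≤ 15 * δ * airyDecay x :=
  hw.norm_integral_le_decay (p₀ := √(|x| / 3)) (Real.sqrt_nonneg _)
    (by rw [Real.sq_sqrt (by positivity)]; ring) (airyDecay_pos x)
    (by rw [airyDecay_sq]; exact inv_mul_cancel₀ (by positivity)) hR

/-- Uniform smallness of the tails of the oscillatory integral on bounded sets. -/
theorem ProfileBound.norm_integral_tail_le (hw : ProfileBound w δ) {x a b r : ℝ} (ha : 1 ≤ a)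
    (hab : a ≤ b) (hx : |x| ≤ a ^ 2) (hr : 0 < r) (hr2 : r ^ 2 * (2 * a) = 1) :
    ‖∫ p in a..b, airyPhase x p * w p‖ ≤ 6 * δ * r := by
  have hr1 : r ≤ 1 := by nlinarith
  refine hw.norm_integral_le_of_nonstationary (c := 0) (by linarith) hab hr hr1 (fun p hp => ?_)
    fun p hp => ?_
  · rw [sub_zero]
    exact le_trans (by linarith [hp.1]) (le_abs_self _)
  · have hp0 : 0 < p := by linarith [hp.1]
    rw [sub_zero, abs_of_pos hp0]
    have h1 : 2 * a * p ≤ |x + 3 * p ^ 2| := by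
      refine le_trans ?_ (le_abs_self _)
      nlinarith [(abs_le.1 hx).1, hp.1, mul_le_mul_of_nonneg_right hp.1 hp0.le]
    calc p = r ^ 2 * (2 * a * p) := by linear_combination -p * hr2
      _ ≤ _ := by gcongr

end

section

open scoped ContDiff

theorem HasCompactSupport.iteratedDeriv_real {ψ : ℝ → ℝ} (h : HasCompactSupport ψ) (k : ℕ) :
    HasCompactSupport (iteratedDeriv k ψ) := by
  induction k with
  | zero => simpa using h
  | succ k ih => rw [iteratedDeriv_succ]; exact ih.deriv

/-- Integration by parts against a compactly supported function. -/
theorem integral_mul_deriv_of_hasCompactSupport {f f' χ : ℝ → ℝ} (hf : ∀ x, HasDerivAt f (f' x) x)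
    (hf' : Continuous f') (hχ : ContDiff ℝ 1 χ) (hc : HasCompactSupport χ) :
    ∫ x, f x * deriv χ x = -∫ x, f' x * χ x := by
  have hfc : Continuous f := continuous_iff_continuousAt.2 fun x => (hf x).continuousAt
  have hχ' : Continuous (deriv χ) := hχ.continuous_deriv le_rfl
  exact integral_mul_deriv_eq_deriv_mul_of_integrable (fun x _ => hf x)
    (fun x _ => (hχ.differentiable one_ne_zero x).hasDerivAt)
    ((hfc.mul hχ').integrable_of_hasCompactSupport hc.deriv.mul_left)
    ((hf'.mul hχ.continuous).integrable_of_hasCompactSupport hc.mul_left)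
    ((hfc.mul hχ.continuous).integrable_of_hasCompactSupport hc.mul_left)

/-- A linear functional on test functions that vanishes on derivatives is a multiple of the
integral. -/
theorem exists_eq_const_mul_integral (L : (ℝ → ℝ) → ℝ)
    (hL : ∀ ψ, ContDiff ℝ ∞ ψ → HasCompactSupport ψ → L (deriv ψ) = 0)
    (hlin : ∀ ψ χ, ContDiff ℝ ∞ ψ → HasCompactSupport ψ → ContDiff ℝ ∞ χ → HasCompactSupport χ →
      ∀ c : ℝ, L (fun x => ψ x - c * χ x) = L ψ - c * L χ) :
    ∃ c, ∀ ψ, ContDiff ℝ ∞ ψ → HasCompactSupport ψ → L ψ = c * ∫ x, ψ x := by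
  let b : ContDiffBump (0 : ℝ) := ⟨1, 2, one_pos, one_lt_two⟩
  set ρ : ℝ → ℝ := b.normed volume with hρ
  have hρs : ContDiff ℝ ∞ ρ := b.contDiff_normed
  have hρc : HasCompactSupport ρ := b.hasCompactSupport_normed
  have hρi : ∫ x, ρ x = 1 := b.integral_normed
  refine ⟨L ρ, fun ψ hψ hc => ?_⟩
  set I := ∫ x, ψ x with hI
  set θ : ℝ → ℝ := fun x => ψ x - I * ρ x with hθ
  have hθs : ContDiff ℝ ∞ θ := hψ.sub (contDiff_const.mul hρs)
  have hθc : HasCompactSupport θ := hc.sub hρc.mul_left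
  have hθi : Integrable θ := hθs.continuous.integrable_of_hasCompactSupport hθc
  have hθ0 : ∫ x, θ x = 0 := by
    rw [integral_sub (hψ.continuous.integrable_of_hasCompactSupport hc)
      ((hρs.continuous.integrable_of_hasCompactSupport hρc).const_mul I), integral_const_mul, hρi,
      mul_one, sub_self]
  obtain ⟨M, hM⟩ := hθc.isCompact.isBounded.exists_norm_le
  have hzero : ∀ x, M < |x| → θ x = 0 := fun x hx => by
    by_contra h
    exact absurd (hM x (subset_tsupport _ h)) (not_le.2 hx)
  -- the primitive of `θ`
  set P : ℝ → ℝ := fun x => ∫ y in (-|M| - 1)..x, θ y with hP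
  have hPd : ∀ x, HasDerivAt P (θ x) x := fun x =>
    intervalIntegral.integral_hasDerivAt_right (hθs.continuous.intervalIntegrable _ _)
      (hθs.continuous.stronglyMeasurableAtFilter _ _) hθs.continuous.continuousAt
  have hPder : deriv P = θ := funext fun x => (hPd x).deriv
  have hPs : ContDiff ℝ ∞ P := by
    rw [contDiff_infty_iff_deriv]
    exact ⟨fun x => (hPd x).differentiableAt, hPder ▸ hθs⟩
  have hMM := le_abs_self M
  have hPc : HasCompactSupport P := by
    refine HasCompactSupport.intro (isCompact_Icc (a := -|M| - 1) (b := |M| + 1)) fun x hx => ?_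
    by_cases h1 : x < -|M| - 1
    · refine intervalIntegral.integral_zero_ae (ae_of_all _ fun y hy => hzero y ?_)
      rw [uIoc_of_ge h1.le] at hy
      have := neg_le_abs y
      linarith [hy.2, abs_nonneg M]
    · have h2 : |M| + 1 < x := by
        by_contra h
        exact hx ⟨not_lt.1 h1, not_lt.1 h⟩
      rw [hP]
      have hle : -|M| - 1 ≤ x := not_lt.1 h1
      simp only
      rw [intervalIntegral.integral_of_le hle, setIntegral_eq_integral_of_forall_compl_eq_zero, hθ0]
      intro y hy
      refine hzero y ?_
      by_contra hh
      have := abs_le.1 (not_lt.1 hh)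
      exact hy ⟨by linarith, by linarith⟩
  have h1 := hL P hPs hPc
  rw [hPder, hlin ψ ρ hψ hc hρs hρc] at h1
  linarith

theorem integral_pow_mul_iteratedDeriv {ψ : ℝ → ℝ} (hψ : ContDiff ℝ ∞ ψ)
    (hc : HasCompactSupport ψ) (k : ℕ) :
    ∫ x, x ^ k * iteratedDeriv k ψ x = (-1) ^ k * k.factorial * ∫ x, ψ x := by
  induction k with
  | zero => simp
  | succ k ih =>
    have h1 : ContDiff ℝ 1 (iteratedDeriv k ψ) := by
      rw [iteratedDeriv_eq_iterate]
      exact (hψ.iterate_deriv k).of_le (mod_cast le_top)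
    have h2 := integral_mul_deriv_of_hasCompactSupport (f := fun x => x ^ (k + 1))
      (f' := fun x => ((k + 1 : ℕ) : ℝ) * x ^ k) (fun x => hasDerivAt_pow (k + 1) x)
      (by fun_prop) h1 (hc.iteratedDeriv_real k)
    rw [iteratedDeriv_succ, h2]
    simp_rw [mul_assoc]
    rw [integral_const_mul, ih, Nat.factorial_succ]
    push_cast
    ring

/-- A continuous function whose `k`-th distributional derivative vanishes is a polynomial of degree
less than `k`. -/
theorem exists_eq_sum_pow_of_integral_iteratedDeriv_eq_zero (k : ℕ) {h : ℝ → ℝ} (hh : Continuous h)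
    (hk : ∀ ψ, ContDiff ℝ ∞ ψ → HasCompactSupport ψ → ∫ x, h x * iteratedDeriv k ψ x = 0) :
    ∃ c : ℕ → ℝ, ∀ x, h x = ∑ i ∈ Finset.range k, c i * x ^ i := by
  have hcs : ∀ (k : ℕ) (ψ : ℝ → ℝ), ContDiff ℝ ∞ ψ → ContDiff ℝ 0 (iteratedDeriv k ψ) :=
    fun k ψ hψ => contDiff_zero.2 (hψ.continuous_iteratedDeriv k (mod_cast le_top))
  induction k generalizing h with
  | zero =>
    refine ⟨0, fun x => ?_⟩
    have h1 : h =ᵐ[volume] 0 := by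
      refine ae_eq_zero_of_integral_contDiff_smul_eq_zero hh.locallyIntegrable fun g hg hgc => ?_
      have := hk g hg hgc
      simpa [mul_comm] using this
    have h2 := (Continuous.ae_eq_iff_eq volume hh continuous_zero).1 h1
    simp [h2]
  | succ k ih =>
    have hint : ∀ ψ, ContDiff ℝ ∞ ψ → HasCompactSupport ψ →
        ∀ f : ℝ → ℝ, Continuous f → Integrable fun x => f x * iteratedDeriv k ψ x :=
      fun ψ hψ hc f hf => (hf.mul (hcs k ψ hψ).continuous).integrable_of_hasCompactSupport
        (hc.iteratedDeriv_real k).mul_left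
    obtain ⟨c, hc⟩ := exists_eq_const_mul_integral (fun ψ => ∫ x, h x * iteratedDeriv k ψ x)
      (fun ψ hψ hψc => by simpa [iteratedDeriv_succ'] using hk ψ hψ hψc)
      (fun ψ χ hψ hψc hχ hχc c => by
        rw [← integral_const_mul, ← integral_sub (hint ψ hψ hψc h hh)
          ((hint χ hχ hχc h hh).const_mul c)]
        refine integral_congr_ae (ae_of_all _ fun x => ?_)
        have h1 := iteratedDeriv_fun_sub (n := k) (x := x) (f := ψ) (g := fun x => c * χ x)
          (hψ.contDiffAt.of_le (mod_cast le_top))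
          ((contDiff_const.mul hχ).contDiffAt.of_le (mod_cast le_top))
        have h2 := iteratedDeriv_const_mul_field (n := k) (x := x) c χ
        simp only [h1, h2]
        ring)
    set a : ℝ := c * ((-1 : ℝ) ^ k * k.factorial)⁻¹ with ha
    have hne : ((-1 : ℝ) ^ k * k.factorial) ≠ 0 := by positivity
    obtain ⟨d, hd⟩ := ih (h := fun x => h x - a * x ^ k) (by fun_prop) fun ψ hψ hψc => by
      have h1 := hint ψ hψ hψc h hh
      have h2 := hint ψ hψ hψc (fun x => x ^ k) (by fun_prop)
      have h3 : ∀ x, (h x - a * x ^ k) * iteratedDeriv k ψ x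
        = h x * iteratedDeriv k ψ x - a * (x ^ k * iteratedDeriv k ψ x) := fun x => by ring
      simp_rw [h3]
      rw [integral_sub h1 (h2.const_mul a), integral_const_mul,
        integral_pow_mul_iteratedDeriv hψ hψc, hc ψ hψ hψc, ha]
      field_simp
      simp
    refine ⟨fun i => if i = k then a else d i, fun x => ?_⟩
    have h1 : ∀ i ∈ Finset.range k, (if i = k then a else d i) * x ^ i = d i * x ^ i :=
      fun i hi => by rw [if_neg (Finset.mem_range.1 hi).ne]
    simp only [Finset.sum_range_succ, if_pos]
    rw [Finset.sum_congr rfl h1, ← hd x]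
    ring

/-- Regularity: if `f''' = n'` in the sense of distributions with `f`, `n` continuous, then `f` is
twice differentiable and `f'' = n + β` for a constant `β`. -/
theorem exists_hasDerivAt_of_integral_eq_zero {f n : ℝ → ℝ} (hf : Continuous f) (hn : Continuous n)
    (hfn : ∀ ψ, ContDiff ℝ ∞ ψ → HasCompactSupport ψ →
      ∫ x, (f x * deriv (deriv (deriv ψ)) x - n x * deriv ψ x) = 0) :
    ∃ (f₁ : ℝ → ℝ) (β : ℝ), (∀ x, HasDerivAt f (f₁ x) x) ∧ ∀ x, HasDerivAt f₁ (n x + β) x := by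
  have prim : ∀ g : ℝ → ℝ, Continuous g → ∀ x, HasDerivAt (fun x => ∫ y in (0 : ℝ)..x, g y) (g x) x :=
    fun g hg x => intervalIntegral.integral_hasDerivAt_right (hg.intervalIntegrable _ _)
      (hg.stronglyMeasurableAtFilter _ _) hg.continuousAt
  set N₁ : ℝ → ℝ := fun x => ∫ y in (0 : ℝ)..x, n y with hN₁
  have hN₁d := prim n hn
  have hN₁c : Continuous N₁ := continuous_iff_continuousAt.2 fun x => (hN₁d x).continuousAt
  set N : ℝ → ℝ := fun x => ∫ y in (0 : ℝ)..x, N₁ y with hN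
  have hNd := prim N₁ hN₁c
  have hNc : Continuous N := continuous_iff_continuousAt.2 fun x => (hNd x).continuousAt
  obtain ⟨c, hc⟩ := exists_eq_sum_pow_of_integral_iteratedDeriv_eq_zero 3 (hf.sub hNc)
    fun ψ hψ hψc => by
      have hψ1 : ContDiff ℝ ∞ (deriv ψ) := (contDiff_infty_iff_deriv.1 hψ).2
      have hψ2 : ContDiff ℝ ∞ (deriv (deriv ψ)) := (contDiff_infty_iff_deriv.1 hψ1).2
      have hψ3 : ContDiff ℝ ∞ (deriv (deriv (deriv ψ))) := (contDiff_infty_iff_deriv.1 hψ2).2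
      have e1 := integral_mul_deriv_of_hasCompactSupport hNd hN₁c (hψ2.of_le (mod_cast le_top))
        hψc.deriv.deriv
      have e2 := integral_mul_deriv_of_hasCompactSupport hN₁d hn (hψ1.of_le (mod_cast le_top))
        hψc.deriv
      have i1 : Integrable fun x => f x * deriv (deriv (deriv ψ)) x :=
        (hf.mul hψ3.continuous).integrable_of_hasCompactSupport hψc.deriv.deriv.deriv.mul_left
      have i2 : Integrable fun x => N x * deriv (deriv (deriv ψ)) x :=
        (hNc.mul hψ3.continuous).integrable_of_hasCompactSupport hψc.deriv.deriv.deriv.mul_left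
      have i3 : Integrable fun x => n x * deriv ψ x :=
        (hn.mul hψ1.continuous).integrable_of_hasCompactSupport hψc.deriv.mul_left
      have h := hfn ψ hψ hψc
      rw [integral_sub i1 i3] at h
      simp only [iteratedDeriv_succ, iteratedDeriv_zero, sub_mul, Pi.sub_apply]
      rw [integral_sub i1 i2, e1, e2]
      linarith
  have hf_eq : f = fun x => N x + (c 0 + c 1 * x + c 2 * x ^ 2) := funext fun x => by
    have := hc x
    simp only [Finset.sum_range_succ, Finset.sum_range_zero, Pi.sub_apply] at this
    linarith
  refine ⟨fun x => N₁ x + (c 1 + 2 * c 2 * x), 2 * c 2, fun x => ?_, fun x => ?_⟩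
  · rw [hf_eq]
    refine (hNd x).add ?_
    refine ((((hasDerivAt_id x).const_mul (c 1)).const_add (c 0)).add
      ((hasDerivAt_pow 2 x).const_mul (c 2))).congr_deriv ?_
    push_cast
    ring
  · refine (hN₁d x).add ?_
    refine (((hasDerivAt_id x).const_mul (2 * c 2)).const_add (c 1)).congr_deriv ?_
    ring

end

section

open scoped FourierTransform

/-- Plancherel identity for the inverse Fourier integral without normalization. -/
theorem integral_norm_sq_fourier {f : ℝ → ℂ} (hf : Integrable f) (hf₂ : MemLp f 2) :
    Integrable (fun x : ℝ => ‖∫ p : ℝ, Complex.exp (Complex.I * ((p * x : ℝ) : ℂ)) * f p‖ ^ 2) ∧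
    ∫ x : ℝ, ‖∫ p : ℝ, Complex.exp (Complex.I * ((p * x : ℝ) : ℂ)) * f p‖ ^ 2
      = 2 * Real.pi * ∫ p, ‖f p‖ ^ 2 := by
  have hpl := eLpNorm_fourier_eq hf hf₂
  have hcont : Continuous (𝓕 f) :=
    VectorFourier.fourierIntegral_continuous Real.continuous_fourierChar continuous_inner hf
  have hm : MemLp (𝓕 f) 2 := ⟨hcont.aestronglyMeasurable, hpl ▸ hf₂.2⟩
  have hint : Integrable fun ξ => ‖𝓕 f ξ‖ ^ 2 := hm.integrable_norm_pow (by norm_num)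
  have heq : ∫ ξ, ‖𝓕 f ξ‖ ^ 2 = ∫ p, ‖f p‖ ^ 2 := by
    rw [hm.eLpNorm_eq_integral_rpow_norm (by norm_num) (by norm_num),
      hf₂.eLpNorm_eq_integral_rpow_norm (by norm_num) (by norm_num),
      ENNReal.ofReal_eq_ofReal_iff (by positivity) (by positivity)] at hpl
    simp only [ENNReal.toReal_ofNat, Real.rpow_ofNat] at hpl
    exact (Real.rpow_left_inj (by positivity) (by positivity) (by norm_num)).1 hpl
  have hfour : ∀ x : ℝ, ∫ p : ℝ, Complex.exp (Complex.I * ((p * x : ℝ) : ℂ)) * f p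
      = 𝓕 f (-(2 * Real.pi)⁻¹ * x) := fun x => by
    rw [Real.fourier_real_eq_integral_exp_smul]
    refine integral_congr_ae (ae_of_all _ fun p => ?_)
    simp only [smul_eq_mul]
    congr 2
    rw [mul_comm]
    congr 2
    have := Real.pi_pos.ne'
    field_simp
  simp_rw [hfour]
  refine ⟨hint.comp_mul_left' (neg_ne_zero.2 (by positivity)), ?_⟩
  rw [Measure.integral_comp_mul_left (fun ξ => ‖𝓕 f ξ‖ ^ 2), heq, smul_eq_mul, inv_neg, inv_inv,
    abs_neg, abs_of_pos (by positivity)]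

/-- If `D` is a bounded pointwise limit of derivatives of functions bounded in `L²`, then `D` has a
square integrable primitive. -/
theorem exists_sq_integrable_primitive {Gn Dn : ℕ → ℝ → ℝ} {D : ℝ → ℝ} {C K : ℝ}
    (hG : ∀ n x, HasDerivAt (Gn n) (Dn n x) x) (hDc : ∀ n, Continuous (Dn n))
    (hDb : ∀ n x, |Dn n x| ≤ K) (hGi : ∀ n, Integrable fun x => Gn n x ^ 2)
    (hGC : ∀ n, ∫ x, Gn n x ^ 2 ≤ C) (hlim : ∀ x, Tendsto (fun n => Dn n x) atTop (𝓝 (D x)))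
    (hD : Continuous D) :
    ∃ G : ℝ → ℝ, (∀ x, HasDerivAt G (D x) x) ∧ Integrable fun x => G x ^ 2 := by
  have hK : 0 ≤ K := (abs_nonneg _).trans (hDb 0 0)
  have hGc : ∀ n, Continuous (Gn n) := fun n =>
    continuous_iff_continuousAt.2 fun x => (hG n x).continuousAt
  have hFTC : ∀ n x, Gn n x = Gn n 0 + ∫ y in (0 : ℝ)..x, Dn n y := fun n x => by
    rw [intervalIntegral.integral_eq_sub_of_hasDerivAt (fun y _ => hG n y)
      ((hDc n).intervalIntegrable _ _)]
    ring
  have h0 : ∀ n, Gn n 0 ^ 2 ≤ 2 * C + 2 * K ^ 2 := fun n => by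
    have h1 : ∀ x ∈ Ioc (0 : ℝ) 1, Gn n 0 ^ 2 ≤ 2 * Gn n x ^ 2 + 2 * K ^ 2 := fun x hx => by
      have h2 : |∫ y in (0 : ℝ)..x, Dn n y| ≤ K := by
        have h3 := intervalIntegral.norm_integral_le_of_norm_le_const (a := 0) (b := x) (C := K)
          (f := Dn n) fun y _ => hDb n y
        rw [sub_zero, abs_of_pos hx.1] at h3
        exact h3.trans (mul_le_of_le_one_right hK hx.2)
      have h4 := sq_le_sq' (abs_le.1 h2).1 (abs_le.1 h2).2
      have h5 := hFTC n x
      have h6 : Gn n 0 = Gn n x - ∫ y in (0 : ℝ)..x, Dn n y := by linarith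
      rw [h6]
      nlinarith [sq_nonneg (Gn n x + ∫ y in (0 : ℝ)..x, Dn n y)]
    have h2 := setIntegral_mono_on (μ := volume) (f := fun _ => Gn n 0 ^ 2)
      (g := fun x => 2 * Gn n x ^ 2 + 2 * K ^ 2) (s := Ioc 0 1) (by simp)
      (((hGi n).const_mul 2).integrableOn.add (integrableOn_const (by simp))) measurableSet_Ioc h1
    rw [integral_add ((hGi n).const_mul 2).integrableOn (integrableOn_const (by simp)), integral_const_mul] at h2
    have h3 : ∫ x in Ioc (0 : ℝ) 1, Gn n x ^ 2 ≤ C :=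
      (setIntegral_le_integral (hGi n) (ae_of_all _ fun x => sq_nonneg _)).trans (hGC n)
    simp at h2
    linarith
  obtain ⟨a, -, φ, hφ, ha⟩ := tendsto_subseq_of_bounded (x := fun n => Gn n 0)
    (s := Metric.closedBall 0 (√(2 * C + 2 * K ^ 2))) Metric.isBounded_closedBall fun n => by
      rw [mem_closedBall_zero_iff, Real.norm_eq_abs]
      exact Real.abs_le_sqrt (h0 n)
  have hGd : ∀ x, HasDerivAt (fun x => a + ∫ y in (0 : ℝ)..x, D y) (D x) x := fun x =>
    (intervalIntegral.integral_hasDerivAt_right (hD.intervalIntegrable _ _)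
      (hD.stronglyMeasurableAtFilter _ _) hD.continuousAt).const_add a
  refine ⟨_, hGd, ?_⟩
  have hpt : ∀ x, Tendsto (fun n => Gn (φ n) x) atTop (𝓝 (a + ∫ y in (0 : ℝ)..x, D y)) := by
    intro x
    simp_rw [hFTC _ x]
    refine ha.add ?_
    refine intervalIntegral.tendsto_integral_filter_of_dominated_convergence (fun _ => K)
      (Eventually.of_forall fun n => (hDc _).aestronglyMeasurable)
      (Eventually.of_forall fun n => ae_of_all _ fun y _ => hDb _ y) (by simp)
      (ae_of_all _ fun y _ => (hlim y).comp hφ.tendsto_atTop)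
  have hle : ∀ n, eLpNorm (Gn (φ n)) 2 volume ≤ ENNReal.ofReal (√C) := fun n => by
    have hm : MemLp (Gn (φ n)) 2 :=
      (memLp_two_iff_integrable_sq (hGc _).aestronglyMeasurable).2 (hGi _)
    rw [hm.eLpNorm_eq_integral_rpow_norm (by norm_num) (by norm_num)]
    refine ENNReal.ofReal_le_ofReal ?_
    simp only [ENNReal.toReal_ofNat, Real.rpow_ofNat, Real.norm_eq_abs, sq_abs]
    rw [Real.sqrt_eq_rpow, one_div]
    exact Real.rpow_le_rpow (integral_nonneg fun x => sq_nonneg _) (hGC _) (by norm_num)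
  have hlimc : Continuous fun x => a + ∫ y in (0 : ℝ)..x, D y :=
    continuous_iff_continuousAt.2 fun x => (hGd x).continuousAt
  refine (memLp_two_iff_integrable_sq hlimc.aestronglyMeasurable).1
    ⟨hlimc.aestronglyMeasurable, ?_⟩
  refine lt_of_le_of_lt (Lp.eLpNorm_lim_le_liminf_eLpNorm
    (fun n => (hGc (φ n)).aestronglyMeasurable) _ (ae_of_all _ hpt)) ?_
  refine lt_of_le_of_lt (liminf_le_liminf (Eventually.of_forall hle)) ?_
  rw [liminf_const]
  exact ENNReal.ofReal_lt_top

end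

section

namespace MKdVPaper
variable {w : ℝ → ℂ} {δ : ℝ}

theorem MemE.profileBound (hm : MemE w) (hδ : 0 < δ) (h : EnormP 1 w ≤ δ) : ProfileBound w δ := by
  rw [EnormP, Real.one_rpow, one_mul] at h
  have h1 : 0 ≤ supN w := (norm_nonneg _).trans (le_ciSup hm.bdd 0)
  have h2 : 0 ≤ dL2 w := ENNReal.toReal_nonneg
  refine ⟨hδ, hm.diff, fun p _ => (le_ciSup hm.bdd p).trans (by linarith [show supN w = ⨆ p, ‖w p‖ from rfl]), ?_, ?_⟩
  · exact hm.derivL2.integrable_norm_pow (by norm_num)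
  · have h3 : dL2 w ^ 2 = ∫ p in Ioi 0, ‖deriv w p‖ ^ 2 := by
      rw [dL2, hm.derivL2.eLpNorm_eq_integral_rpow_norm (by norm_num) (by norm_num),
        ENNReal.toReal_ofReal (by positivity)]
      simp only [ENNReal.toReal_ofNat, Real.rpow_ofNat]
      rw [← Real.rpow_natCast, ← Real.rpow_mul (by positivity)]
      norm_num
    rw [← h3]
    exact pow_le_pow_left₀ h2 (by linarith) 2

theorem physPartial_one (w : ℝ → ℂ) (x : ℝ) {R : ℝ} (hR : 0 ≤ R) :
    physPartial w 1 x R = 1 / Real.pi * (∫ p in (0 : ℝ)..R, airyPhase x p * w p).re := by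
  rw [intervalIntegral.integral_of_le hR]
  rfl

theorem abs_physPartial_le (hw : ProfileBound w δ) (x : ℝ) {R : ℝ} (hR : 0 ≤ R) :
    |physPartial w 1 x R| ≤ 5 * δ * airyDecay x := by
  have h := (Complex.abs_re_le_norm _).trans (hw.norm_integral_le_airyDecay x hR)
  have hpi := Real.pi_gt_three
  have h0 : 0 ≤ δ * airyDecay x := mul_nonneg hw.pos.le (airyDecay_pos x).le
  rw [physPartial_one w x hR, abs_mul, abs_of_pos (by positivity), one_div,
    inv_mul_le_iff₀ Real.pi_pos]
  nlinarith

theorem IsPhys.abs_le {V : ℝ → ℝ} (hV : IsPhys w 1 V) (hw : ProfileBound w δ) (x : ℝ) :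
    |V x| ≤ 5 * δ * airyDecay x :=
  le_of_tendsto (hV x).abs ((eventually_ge_atTop 0).mono fun _ hR => abs_physPartial_le hw x hR)

theorem continuous_physPartial (hw : ProfileBound w δ) {R : ℝ} (hR : 0 ≤ R) :
    Continuous fun x => physPartial w 1 x R := by
  simp_rw [physPartial_one w _ hR]
  refine continuous_const.mul (Complex.continuous_re.comp ?_)
  refine intervalIntegral.continuous_of_dominated_interval (bound := fun _ => δ)
    (fun x => ?_) (fun x => ?_) (by simp) ?_
  · exact (intervalIntegrable_iff.1 (hw.intervalIntegrable x le_rfl hR)).aestronglyMeasurable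
  · refine ae_of_all _ fun p hp => ?_
    rw [uIoc_of_le hR] at hp
    rw [norm_mul, norm_airyPhase, one_mul]
    exact hw.bound p hp.1
  · exact ae_of_all _ fun p _ => by unfold airyPhase; fun_prop

theorem IsPhys.continuous {V : ℝ → ℝ} (hV : IsPhys w 1 V) (hw : ProfileBound w δ) :
    Continuous V := by
  have hδ := hw.pos
  have key : TendstoLocallyUniformly (fun R x => physPartial w 1 x R) V atTop := by
    rw [tendstoLocallyUniformly_iff_forall_isCompact]
    intro K hK
    obtain ⟨X, hX⟩ := hK.isBounded.exists_norm_le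
    rw [Metric.tendstoUniformlyOn_iff]
    intro η hη
    have hlim : Tendsto (fun R : ℝ => 6 * δ * √((2 * R)⁻¹)) atTop (𝓝 0) := by
      have h1 : Tendsto (fun R : ℝ => (2 * R)⁻¹) atTop (𝓝 0) :=
        tendsto_inv_atTop_zero.comp (tendsto_id.const_mul_atTop two_pos)
      simpa using ((Real.continuous_sqrt.tendsto 0).comp h1).const_mul (6 * δ)
    filter_upwards [hlim.eventually_lt_const hη, eventually_ge_atTop 1, eventually_ge_atTop X]
      with R h1 h2 h3 x hx
    have hxX : |x| ≤ R ^ 2 := (hX x hx).trans (by nlinarith)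
    rw [Real.dist_eq]
    refine lt_of_le_of_lt ?_ h1
    refine le_of_tendsto (((hV x).sub_const (physPartial w 1 x R)).abs)
      ((eventually_ge_atTop R).mono fun R' hR' => ?_)
    have hR0 : (0 : ℝ) ≤ R := by linarith
    rw [physPartial_one w x hR0, physPartial_one w x (hR0.trans hR'), ← mul_sub, ← Complex.sub_re,
      intervalIntegral.integral_interval_sub_left (hw.intervalIntegrable x le_rfl (hR0.trans hR'))
        (hw.intervalIntegrable x le_rfl hR0), abs_mul, abs_of_pos (by positivity)]
    have h4 := (Complex.abs_re_le_norm _).trans (hw.norm_integral_tail_le h2 hR' hxX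
      (r := √((2 * R)⁻¹)) (Real.sqrt_pos.2 (by positivity))
      (by rw [Real.sq_sqrt (by positivity)]; exact inv_mul_cancel₀ (by positivity)))
    have h5 : 1 / Real.pi ≤ 1 := by
      rw [div_le_one Real.pi_pos]
      linarith [Real.pi_gt_three]
    exact (mul_le_of_le_one_left (abs_nonneg _) h5).trans h4
  exact key.continuous ((eventually_ge_atTop 0).mono fun R hR => continuous_physPartial hw hR).frequently
end MKdVPaper

end

section

open scoped ContDiff
namespace MKdVPaper

/-- The self-similar test function `a(t) ψ(t^{-1/3} x)`. -/
noncomputable def selfSimilarTest (a ψ : ℝ → ℝ) (t x : ℝ) : ℝ := a t * ψ (t ^ (-(1 / 3 : ℝ)) * x)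

section
variable {a ψ : ℝ → ℝ}

theorem contDiff_selfSimilarTest (ha : ContDiff ℝ ∞ a) (ha0 : ∀ t < 2, a t = 0)
    (hψ : ContDiff ℝ ∞ ψ) :
    ContDiff ℝ ∞ fun q : ℝ × ℝ => selfSimilarTest a ψ q.1 q.2 := by
  rw [contDiff_iff_contDiffAt]
  intro q
  rcases lt_or_ge q.1 2 with h | h
  · have : (fun q : ℝ × ℝ => selfSimilarTest a ψ q.1 q.2) =ᶠ[𝓝 q] fun _ => 0 := by
      filter_upwards [continuous_fst.continuousAt.eventually_lt_const h] with q' hq'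
      rw [selfSimilarTest, ha0 _ hq', zero_mul]
    exact contDiffAt_const.congr_of_eventuallyEq this
  · have hne : q.1 ≠ 0 := by linarith
    have h1 : ContDiffAt ℝ ∞ (fun q : ℝ × ℝ => q.1 ^ (-(1 / 3 : ℝ))) q :=
      contDiffAt_fst.rpow_const_of_ne hne
    exact (ha.contDiffAt.comp q contDiffAt_fst).mul
      (hψ.contDiffAt.comp q (h1.mul contDiffAt_snd))

theorem exists_isCompact_selfSimilarTest (ha0 : ∀ t < 2, a t = 0) (ha3 : ∀ t > 3, a t = 0)
    (hc : HasCompactSupport ψ) : ∃ K : Set (ℝ × ℝ), IsCompact K ∧ K ⊆ Ioi 1 ×ˢ univ ∧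
      ∀ q ∉ K, selfSimilarTest a ψ q.1 q.2 = 0 := by
  obtain ⟨M, hM⟩ := hc.isCompact.isBounded.exists_norm_le
  refine ⟨Icc 2 3 ×ˢ Icc (-(3 * |M|)) (3 * |M|), isCompact_Icc.prod isCompact_Icc, fun q hq => ?_,
    fun q hq => ?_⟩
  · exact ⟨lt_of_lt_of_le one_lt_two hq.1.1, mem_univ _⟩
  · by_contra h0
    obtain ⟨h1, h2⟩ := mul_ne_zero_iff.1 h0
    have ht2 : 2 ≤ q.1 := by
      by_contra h
      exact h1 (ha0 _ (not_le.1 h))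
    have ht3 : q.1 ≤ 3 := by
      by_contra h
      exact h1 (ha3 _ (not_le.1 h))
    have h3 := hM _ (subset_tsupport _ h2)
    have hpos : 0 < q.1 := by linarith
    rw [Real.norm_eq_abs, abs_mul, abs_of_pos (by positivity), Real.rpow_neg hpos.le,
      inv_mul_le_iff₀ (by positivity)] at h3
    have h4 : q.1 ^ (1 / 3 : ℝ) ≤ 3 := by
      refine le_trans ?_ ht3
      exact Real.rpow_le_self_of_one_le (by linarith) (by norm_num)
    have h5 : |q.2| ≤ 3 * |M| := h3.trans (by
      have := le_abs_self M
      have h6 : 0 ≤ q.1 ^ (1 / 3 : ℝ) := by positivity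
      nlinarith [abs_nonneg M])
    exact hq ⟨⟨ht2, ht3⟩, abs_le.1 h5⟩

theorem dx1_selfSimilarTest (hψ : Differentiable ℝ ψ) :
    dx1 (selfSimilarTest a ψ)
      = selfSimilarTest (fun t => a t * t ^ (-(1 / 3 : ℝ))) (deriv ψ) := by
  funext t x
  have h1 : HasDerivAt (fun y => t ^ (-(1 / 3 : ℝ)) * y) (t ^ (-(1 / 3 : ℝ))) x := by
    simpa using (hasDerivAt_id x).const_mul (t ^ (-(1 / 3 : ℝ)))
  have h2 := ((hψ _).hasDerivAt.comp x h1).const_mul (a t)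
  rw [dx1, selfSimilarTest]
  refine Eq.trans h2.deriv ?_
  ring

theorem dt1_selfSimilarTest (ha : Differentiable ℝ a) (ha0 : ∀ t < 2, a t = 0)
    (hψ : Differentiable ℝ ψ) (t x : ℝ) :
    dt1 (selfSimilarTest a ψ) t x = deriv a t * ψ (t ^ (-(1 / 3 : ℝ)) * x)
      - a t / t * (t ^ (-(1 / 3 : ℝ)) * x * deriv ψ (t ^ (-(1 / 3 : ℝ)) * x) / 3) := by
  rcases lt_or_ge t 2 with h | h
  · have h1 : (fun s => selfSimilarTest a ψ s x) =ᶠ[𝓝 t] fun _ => 0 := by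
      filter_upwards [Iio_mem_nhds h] with s hs
      rw [selfSimilarTest, ha0 _ hs, zero_mul]
    have h2 : a =ᶠ[𝓝 t] fun _ => 0 := by
      filter_upwards [Iio_mem_nhds h] with s hs using ha0 _ hs
    rw [dt1, h1.deriv_eq, h2.deriv_eq, ha0 _ h]
    simp
  · have hne : t ≠ 0 := by linarith
    have h1 : HasDerivAt (fun s : ℝ => s ^ (-(1 / 3 : ℝ)) * x)
        (-(1 / 3 : ℝ) * (t ^ (-(1 / 3 : ℝ)) / t) * x) t := by
      have := (Real.hasDerivAt_rpow_const (p := -(1 / 3 : ℝ)) (Or.inl hne)).mul_const x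
      rwa [Real.rpow_sub_one hne] at this
    have h2 := (ha t).hasDerivAt.mul ((hψ _).hasDerivAt.comp t h1)
    rw [dt1]
    refine Eq.trans h2.deriv ?_
    simp only [Function.comp]
    ring

end

/-- The weak form of the profile equation for a self-similar solution. -/
theorem IsSolOn.profile_eq {ε : ℝ} {u : ℝ → ℝ → ℝ} {V : ℝ → ℝ} (hu : IsSolOn ε u (Ici 1))
    (hV : Continuous V)
    (huV : ∀ t ∈ Ici (1 : ℝ), ∀ x, u t x = t ^ (-(1 / 3 : ℝ)) * V (t ^ (-(1 / 3 : ℝ)) * x))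
    {ψ : ℝ → ℝ} (hψ : ContDiff ℝ ∞ ψ) (hc : HasCompactSupport ψ) :
    ∫ y, (V y * (deriv (deriv (deriv ψ)) y - y * deriv ψ y / 3) + ε * V y ^ 3 * deriv ψ y) = 0 := by
  have hψ1 : ContDiff ℝ ∞ (deriv ψ) := (contDiff_infty_iff_deriv.1 hψ).2
  have hψ2 : ContDiff ℝ ∞ (deriv (deriv ψ)) := (contDiff_infty_iff_deriv.1 hψ1).2
  have hψ3 : ContDiff ℝ ∞ (deriv (deriv (deriv ψ))) := (contDiff_infty_iff_deriv.1 hψ2).2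
  let b : ContDiffBump (5 / 2 : ℝ) := ⟨1 / 4, 1 / 2, by norm_num, by norm_num⟩
  set a : ℝ → ℝ := ⇑b with ha
  have has : ContDiff ℝ ∞ a := b.contDiff
  have hac : HasCompactSupport a := b.hasCompactSupport
  have ha_out : ∀ t, 1 / 2 ≤ |t - 5 / 2| → a t = 0 := fun t ht => b.zero_of_le_dist ht
  have ha0 : ∀ t < 2, a t = 0 := fun t ht => ha_out t (by
    rw [abs_sub_comm]
    exact le_trans (by linarith) (le_abs_self _))
  have ha3 : ∀ t > 3, a t = 0 := fun t ht => ha_out t (le_trans (by linarith) (le_abs_self _))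
  have ha0' : ∀ t < 2, deriv a t = 0 := fun t ht => by
    have h2 : a =ᶠ[𝓝 t] fun _ => 0 := by
      filter_upwards [Iio_mem_nhds ht] with s hs using ha0 _ hs
    rw [h2.deriv_eq]
    simp
  have ha3' : ∀ t > 3, deriv a t = 0 := fun t ht => by
    have h2 : a =ᶠ[𝓝 t] fun _ => 0 := by
      filter_upwards [Ioi_mem_nhds ht] with s hs using ha3 _ hs
    rw [h2.deriv_eq]
    simp
  set φ := selfSimilarTest a ψ with hφ
  obtain ⟨K, hK, hK1, hK0⟩ := exists_isCompact_selfSimilarTest ha0 ha3 hc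
  have hsol := hu φ (contDiff_selfSimilarTest has ha0 hψ) (HasCompactSupport.intro hK hK0) (by
    rw [interior_Ici]
    refine (closure_minimal (fun q hq => ?_) hK.isClosed).trans hK1
    by_contra h
    exact hq (hK0 q h))
  -- the integrand in self-similar variables
  set s : ℝ → ℝ := fun t => (max t 1) ^ (-(1 / 3 : ℝ)) with hs
  have hs0 : ∀ t, 0 < s t := fun t => Real.rpow_pos_of_pos (by positivity) _
  have hsc : Continuous s :=
    (continuous_id.max continuous_const).rpow_const fun t => Or.inl (by positivity)
  set W₀ : ℝ → ℝ := fun y => V y * ψ y with hW₀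
  set W : ℝ → ℝ := fun y => V y * (deriv (deriv (deriv ψ)) y - y * deriv ψ y / 3)
    + ε * V y ^ 3 * deriv ψ y with hW
  have c1 := hψ1.continuous
  have c3 := hψ3.continuous
  have hW₀c : Continuous W₀ := hV.mul hψ.continuous
  have hWc : Continuous W := by fun_prop
  have hW₀i : HasCompactSupport W₀ := hc.mul_left
  have hWi : HasCompactSupport W := by
    refine HasCompactSupport.add ?_ hc.deriv.mul_left
    refine HasCompactSupport.mul_left (hc.deriv.deriv.deriv.sub ?_)
    exact (hc.deriv.mul_left (f := fun y => y)).mul_right (f' := fun _ => (3 : ℝ)⁻¹)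
  have hcompact : ∀ (g h : ℝ → ℝ), Continuous g → Continuous h → (∀ t < 2, g t = 0) →
      (∀ t > 3, g t = 0) → HasCompactSupport h →
      Integrable (fun q : ℝ × ℝ => g q.1 * (s q.1 * h (s q.1 * q.2))) := by
    intro g h hg hh hg0 hg3 hhc
    refine Continuous.integrable_of_hasCompactSupport (by fun_prop) ?_
    obtain ⟨K, hK, -, hK0⟩ := exists_isCompact_selfSimilarTest hg0 hg3 hhc
    refine HasCompactSupport.intro hK fun q hq => ?_
    have h1 := hK0 q hq
    rw [selfSimilarTest] at h1
    rcases lt_or_ge q.1 2 with h | h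
    · rw [hg0 _ h, zero_mul]
    · rw [hs]
      simp only
      rw [max_eq_left (by linarith)]
      linear_combination (q.1 ^ (-(1 / 3 : ℝ))) * h1
  have hI1 := hcompact (deriv a) W₀ (has.continuous_deriv (mod_cast le_top)) hW₀c ha0' ha3' hW₀i
  have hac1 : Continuous fun t => a t / max t 1 :=
    has.continuous.div (by fun_prop) fun t => by positivity
  have hI2 := hcompact (fun t => a t / max t 1) W hac1 hWc
    (fun t ht => by rw [ha0 t ht, zero_div]) (fun t ht => by rw [ha3 t ht, zero_div]) hWi
  have hinner : ∀ h : ℝ → ℝ, ∀ t, ∫ x, s t * h (s t * x) = ∫ y, h y := fun h t => by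
    rw [integral_const_mul, Measure.integral_comp_mul_left, abs_of_pos (inv_pos.2 (hs0 t)),
      smul_eq_mul, mul_inv_cancel_left₀ (hs0 t).ne']
  have hcongr : ∀ q : ℝ × ℝ, u q.1 q.2 * (dt1 φ q.1 q.2 + dx1 (dx1 (dx1 φ)) q.1 q.2)
      + ε * u q.1 q.2 ^ 3 * dx1 φ q.1 q.2 = deriv a q.1 * (s q.1 * W₀ (s q.1 * q.2))
        + a q.1 / max q.1 1 * (s q.1 * W (s q.1 * q.2)) := by
    rintro ⟨t, x⟩
    simp only
    rw [hφ, dt1_selfSimilarTest (has.differentiable (by simp)) ha0 (hψ.differentiable (by simp)),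
      dx1_selfSimilarTest (hψ.differentiable (by simp)),
      dx1_selfSimilarTest (hψ1.differentiable (by simp)),
      dx1_selfSimilarTest (hψ2.differentiable (by simp))]
    rcases lt_or_ge t 2 with h | h
    · simp [selfSimilarTest, ha0 t h, ha0' t h]
    · have ht : t ∈ Ici (1 : ℝ) := mem_Ici.2 (by linarith)
      have ht0 : 0 < t := by linarith
      have hst : s t = t ^ (-(1 / 3 : ℝ)) := by
        rw [hs]
        simp only
        rw [max_eq_left (by linarith)]
      have hcube : s t ^ 3 = t⁻¹ := by
        rw [hst, ← Real.rpow_natCast, ← Real.rpow_mul ht0.le, ← Real.rpow_neg_one]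
        norm_num
      rw [huV t ht, max_eq_left (by linarith : (1 : ℝ) ≤ t), div_eq_mul_inv (a t) t, ← hcube]
      simp only [selfSimilarTest, ← hst, hW, hW₀]
      ring
  simp_rw [hcongr] at hsol
  rw [integral_add hI1 hI2, Measure.volume_eq_prod, integral_prod _ hI1, integral_prod _ hI2] at hsol
  simp_rw [integral_const_mul, ← integral_const_mul (s _), hinner] at hsol
  rw [integral_mul_const, integral_mul_const, integral_eq_zero_of_hasDerivAt_of_integrable
    (fun t => (has.differentiable (by simp) t).hasDerivAt)
    ((has.continuous_deriv (mod_cast le_top)).integrable_of_hasCompactSupport hac.deriv)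
    (has.continuous.integrable_of_hasCompactSupport hac), zero_mul, zero_add] at hsol
  refine (mul_eq_zero.1 hsol).resolve_left (ne_of_gt ?_)
  refine hac1.integral_pos_of_hasCompactSupport_nonneg_nonzero (x := 5 / 2) ?_ (fun t => ?_) ?_
  · exact hac.mul_right
  · have := b.nonneg (x := t)
    exact div_nonneg this (by positivity)
  · have : a (5 / 2) = 1 := b.one_of_mem_closedBall (by simp [b])
    rw [this]
    positivity
end MKdVPaper

end

section

section
variable {z : ℝ → ℂ} {δ : ℝ}

theorem ProfileBound.integral_sq_deriv_le (hz : ProfileBound z δ) {a b : ℝ} (ha : 0 ≤ a)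
    (hab : a ≤ b) : ∫ p in a..b, ‖deriv z p‖ ^ 2 ≤ δ ^ 2 := by
  rw [intervalIntegral.integral_of_le hab]
  exact (setIntegral_mono_set hz.integrable (ae_of_all _ fun p => by positivity)
    (Eventually.of_forall fun p hp => ha.trans_lt hp.1)).trans hz.integral_le

theorem ProfileBound.intervalIntegrable_sq_deriv (hz : ProfileBound z δ) {a b : ℝ} (ha : 0 ≤ a)
    (hab : a ≤ b) : IntervalIntegrable (fun p => ‖deriv z p‖ ^ 2) volume a b := by
  rw [intervalIntegrable_iff_integrableOn_Ioc_of_le hab]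
  exact hz.integrable.mono_set fun p hp => ha.trans_lt hp.1

theorem ProfileBound.norm_le_mul_sqrt (hz : ProfileBound z δ) (h0 : Tendsto z (𝓝[>] 0) (𝓝 0))
    {p : ℝ} (hp : 0 < p) : ‖z p‖ ≤ δ * √p := by
  have hδ := hz.pos
  have hsp : 0 < √p := Real.sqrt_pos.2 hp
  have hlim : Tendsto (fun q => ‖z p - z q‖) (𝓝[>] 0) (𝓝 ‖z p‖) := by
    simpa using (h0.const_sub (z p)).norm
  refine le_of_tendsto hlim ?_
  filter_upwards [Ioo_mem_nhdsGT hp] with q hq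
  rw [← intervalIntegral.integral_eq_sub_of_hasDerivAt (f := z) (f' := deriv z) (a := q) (b := p)
    (fun s hs => ?_) (hz.intervalIntegrable_deriv hq.1.le hq.2.le)]
  · have hi := hz.intervalIntegrable_sq_deriv hq.1.le hq.2.le
    have h1 : ∀ s, ‖deriv z s‖ ≤ √p / (2 * δ) * ‖deriv z s‖ ^ 2 + δ / (2 * √p) := fun s => by
      have h2 : 0 ≤ 1 / (2 * δ * √p) * (√p * ‖deriv z s‖ - δ) ^ 2 := by positivity
      have h3 : 1 / (2 * δ * √p) * (√p * ‖deriv z s‖ - δ) ^ 2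
        = √p / (2 * δ) * ‖deriv z s‖ ^ 2 + δ / (2 * √p) - ‖deriv z s‖ := by
        field_simp
        ring
      linarith
    refine (intervalIntegral.norm_integral_le_of_norm_le hq.2.le (ae_of_all _ fun s _ => h1 s)
      ((hi.const_mul _).add (by simp))).trans ?_
    rw [intervalIntegral.integral_add (hi.const_mul _) (by simp),
      intervalIntegral.integral_const_mul, intervalIntegral.integral_const, smul_eq_mul]
    calc √p / (2 * δ) * (∫ s in q..p, ‖deriv z s‖ ^ 2) + (p - q) * (δ / (2 * √p))
        ≤ √p / (2 * δ) * δ ^ 2 + p * (δ / (2 * √p)) := by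
          gcongr
          · exact hz.integral_sq_deriv_le hq.1.le hq.2.le
          · linarith [hq.1]
      _ = √p / (2 * δ) * δ ^ 2 + √p ^ 2 * (δ / (2 * √p)) := by rw [Real.sq_sqrt hp.le]
      _ = δ * √p := by
          field_simp
          ring
  · rw [uIcc_of_le hq.2.le] at hs
    exact (hz.diff s (hq.1.trans_le hs.1)).hasDerivAt

/-- Hardy's inequality for a profile vanishing at the origin. -/
theorem ProfileBound.integral_norm_sq_div_sq_le (hz : ProfileBound z δ)
    (h0 : Tendsto z (𝓝[>] 0) (𝓝 0)) {a b : ℝ} (ha : 0 < a) (hab : a ≤ b) :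
    ∫ p in a..b, ‖z p‖ ^ 2 / p ^ 2 ≤ 6 * δ ^ 2 := by
  have hpos : ∀ p ∈ Icc a b, 0 < p := fun p hp => ha.trans_le hp.1
  have hzc : ContinuousOn z (Icc a b) := fun p hp =>
    (hz.diff p (hpos p hp)).continuousAt.continuousWithinAt
  have hi := hz.intervalIntegrable_sq_deriv ha.le hab
  have hj : IntervalIntegrable (fun p => ‖z p‖ ^ 2 / p ^ 2) volume a b := by
    refine ContinuousOn.intervalIntegrable ?_
    rw [uIcc_of_le hab]
    exact ContinuousOn.div (by fun_prop) (by fun_prop) fun p hp => pow_ne_zero 2 (hpos p hp).ne'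
  have hd : ∀ p ∈ Icc a b, HasDerivAt (fun p => -(‖z p‖ ^ 2 / p))
      (-((2 * inner ℝ (z p) (deriv z p) * p - ‖z p‖ ^ 2 * 1) / p ^ 2)) p := fun p hp =>
    (((hz.diff p (hpos p hp)).hasDerivAt.norm_sq).div (hasDerivAt_id p) (hpos p hp).ne').neg
  have key := intervalIntegral.integral_le_sub_of_hasDeriv_right_of_le hab
    (φ := fun p => 1 / 2 * (‖z p‖ ^ 2 / p ^ 2) - 2 * ‖deriv z p‖ ^ 2)
    (fun p hp => (hd p hp).continuousAt.continuousWithinAt)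
    (fun p hp => (hd p (Ioo_subset_Icc_self hp)).hasDerivWithinAt)
    ((integrableOn_Icc_iff_integrableOn_Ioc).2 <|
      (intervalIntegrable_iff_integrableOn_Ioc_of_le hab).1 ((hj.const_mul _).sub (hi.const_mul _)))
    (fun p hp => by
      have hp0 := hpos p (Ioo_subset_Icc_self hp)
      have h1 := real_inner_le_norm (z p) (deriv z p)
      have h2 : 0 ≤ (‖z p‖ / p - 2 * ‖deriv z p‖) ^ 2 := sq_nonneg _
      have h3 : inner ℝ (z p) (deriv z p) / p ≤ ‖z p‖ * ‖deriv z p‖ / p := by gcongr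
      have h4 : -((2 * inner ℝ (z p) (deriv z p) * p - ‖z p‖ ^ 2 * 1) / p ^ 2)
        = ‖z p‖ ^ 2 / p ^ 2 - 2 * (inner ℝ (z p) (deriv z p) / p) := by
        field_simp
        ring
      have h5 : (‖z p‖ / p - 2 * ‖deriv z p‖) ^ 2 = ‖z p‖ ^ 2 / p ^ 2
        - 4 * (‖z p‖ * ‖deriv z p‖ / p) + 4 * ‖deriv z p‖ ^ 2 := by
        field_simp
        ring
      rw [h4]
      linarith)
  rw [intervalIntegral.integral_sub (hj.const_mul _) (hi.const_mul _),
    intervalIntegral.integral_const_mul, intervalIntegral.integral_const_mul] at key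
  have h1 := hz.integral_sq_deriv_le ha.le hab
  have h2 : ‖z a‖ ^ 2 / a ≤ δ ^ 2 := by
    have h3 := pow_le_pow_left₀ (norm_nonneg _) (hz.norm_le_mul_sqrt h0 ha) 2
    rw [mul_pow, Real.sq_sqrt ha.le] at h3
    exact (div_le_iff₀ ha).2 h3
  have h3 : 0 ≤ ‖z b‖ ^ 2 / b := by
    have := ha.trans_le hab
    positivity
  linarith

/-- The truncated primitive, obtained by dividing the profile by `ip`. -/
noncomputable def truncatedPrimitive (z : ℝ → ℂ) (a b x : ℝ) : ℝ :=
  1 / Real.pi * (∫ p in a..b, airyPhase x p * (z p / (Complex.I * p))).re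

theorem continuous_airyPhase_right (x : ℝ) : Continuous (airyPhase x) :=
  continuous_iff_continuousAt.2 fun p => (hasDerivAt_airyPhase x p).continuousAt

theorem ProfileBound.continuousOn_div (hz : ProfileBound z δ) {a b : ℝ} (ha : 0 < a) :
    ContinuousOn (fun p : ℝ => z p / (Complex.I * p)) (Icc a b) := by
  refine ContinuousOn.div (fun p hp => ?_) (by fun_prop) fun p hp => ?_
  · exact (hz.diff p (ha.trans_le hp.1)).continuousAt.continuousWithinAt
  · exact mul_ne_zero Complex.I_ne_zero (Complex.ofReal_ne_zero.2 (ha.trans_le hp.1).ne')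

theorem ProfileBound.hasDerivAt_truncatedPrimitive (hz : ProfileBound z δ) {a b : ℝ} (ha : 0 < a)
    (hab : a ≤ b) (x : ℝ) : HasDerivAt (truncatedPrimitive z a b)
      (1 / Real.pi * (∫ p in a..b, airyPhase x p * z p).re) x := by
  have hpos : ∀ p ∈ uIoc a b, 0 < p := fun p hp => by
    rw [uIoc_of_le hab] at hp
    exact ha.trans hp.1
  have hc := hz.continuousOn_div (b := b) ha
  have hint : ∀ y, IntervalIntegrable (fun p => airyPhase y p * (z p / (Complex.I * p)))
      volume a b := fun y => by
    refine ContinuousOn.intervalIntegrable ?_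
    rw [uIcc_of_le hab]
    exact (continuous_airyPhase_right y).continuousOn.mul hc
  have h := intervalIntegral.hasDerivAt_integral_of_dominated_loc_of_deriv_le
    (F := fun y p => airyPhase y p * (z p / (Complex.I * p)))
    (F' := fun y p => airyPhase y p * z p) (x₀ := x) (a := a) (b := b) (μ := volume)
    (bound := fun _ => δ) (s := univ) univ_mem
    (Eventually.of_forall fun y => (intervalIntegrable_iff.1 (hint y)).aestronglyMeasurable)
    (hint x)
    (intervalIntegrable_iff.1
      (hz.intervalIntegrable x ha.le (ha.le.trans hab))).aestronglyMeasurable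
    (ae_of_all _ fun p hp y _ => by
      rw [norm_mul, norm_airyPhase, one_mul]
      exact hz.bound p (hpos p hp)) (by simp)
    (ae_of_all _ fun p hp y _ => by
      have hp0 : (p : ℂ) ≠ 0 := Complex.ofReal_ne_zero.2 (hpos p hp).ne'
      have h1 : HasDerivAt (fun y : ℝ => p * y + p ^ 3 * 1) p y := by
        simpa using ((hasDerivAt_id y).const_mul p).add_const (p ^ 3 * 1)
      have h2 := ((h1.ofReal_comp.const_mul Complex.I).cexp).mul_const (z p / (Complex.I * p))
      refine h2.congr_deriv ?_
      rw [airyPhase]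
      have := Complex.I_ne_zero
      field_simp)
  have h3 := (Complex.reCLM.hasFDerivAt.comp_hasDerivAt x h.2).const_mul (1 / Real.pi)
  exact h3

theorem ProfileBound.integral_truncatedPrimitive_sq_le (hz : ProfileBound z δ)
    (h0 : Tendsto z (𝓝[>] 0) (𝓝 0)) {a b : ℝ} (ha : 0 < a) (hab : a ≤ b) :
    Integrable (fun x => truncatedPrimitive z a b x ^ 2) ∧
      ∫ x, truncatedPrimitive z a b x ^ 2 ≤ 2 * Real.pi * (6 * δ ^ 2) := by
  set g : ℝ → ℂ := fun p => airyPhase 0 p * (z p / (Complex.I * p)) with hg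
  set f : ℝ → ℂ := (Ioc a b).indicator g with hf
  have hgc : ContinuousOn g (Icc a b) :=
    (continuous_airyPhase_right 0).continuousOn.mul (hz.continuousOn_div ha)
  have hgn : ∀ p ∈ Ioc a b, ‖g p‖ ^ 2 = ‖z p‖ ^ 2 / p ^ 2 := fun p hp => by
    rw [hg]
    simp only [norm_mul, norm_airyPhase, one_mul, norm_div, Complex.norm_I, Complex.norm_real,
      Real.norm_eq_abs, div_pow, sq_abs]
  have hfi : Integrable f :=
    (integrable_indicator_iff measurableSet_Ioc).2
      ((hgc.integrableOn_Icc).mono_set Ioc_subset_Icc_self)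
  have hsq : Integrable fun p => ‖f p‖ ^ 2 := by
    have h1 : (fun p => ‖f p‖ ^ 2) = (Ioc a b).indicator fun p => ‖g p‖ ^ 2 := by
      funext p
      by_cases hp : p ∈ Ioc a b <;> simp [hf, hp]
    rw [h1]
    exact (integrable_indicator_iff measurableSet_Ioc).2
      (((hgc.norm.pow 2).integrableOn_Icc).mono_set Ioc_subset_Icc_self)
  have hf2 : MemLp f 2 := (memLp_two_iff_integrable_sq_norm hfi.aestronglyMeasurable).2 hsq
  have hfint : ∫ p, ‖f p‖ ^ 2 ≤ 6 * δ ^ 2 := by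
    have h1 : (fun p => ‖f p‖ ^ 2) = (Ioc a b).indicator fun p => ‖z p‖ ^ 2 / p ^ 2 := by
      funext p
      by_cases hp : p ∈ Ioc a b
      · simp only [hf, indicator_of_mem hp]
        exact hgn p hp
      · simp [hf, hp]
    rw [h1, integral_indicator measurableSet_Ioc, ← intervalIntegral.integral_of_le hab]
    exact hz.integral_norm_sq_div_sq_le h0 ha hab
  obtain ⟨hi, he⟩ := integral_norm_sq_fourier hfi hf2
  have heq : ∀ x, ∫ p : ℝ, Complex.exp (Complex.I * ((p * x : ℝ) : ℂ)) * f p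
      = ∫ p in a..b, airyPhase x p * (z p / (Complex.I * p)) := fun x => by
    rw [intervalIntegral.integral_of_le hab, ← integral_indicator measurableSet_Ioc]
    refine integral_congr_ae (ae_of_all _ fun p => ?_)
    by_cases hp : p ∈ Ioc a b
    · simp only [hf, indicator_of_mem hp, hg]
      rw [← mul_assoc, airyPhase, airyPhase, ← Complex.exp_add]
      congr 2
      push_cast
      ring
    · simp [hf, hp]
  simp_rw [heq] at hi he
  have hle : ∀ x, truncatedPrimitive z a b x ^ 2
      ≤ ‖∫ p in a..b, airyPhase x p * (z p / (Complex.I * p))‖ ^ 2 := fun x => by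
    rw [truncatedPrimitive, ← sq_abs, abs_mul, abs_of_pos (by positivity)]
    have h5 : 1 / Real.pi ≤ 1 := by
      rw [div_le_one Real.pi_pos]
      linarith [Real.pi_gt_three]
    exact pow_le_pow_left₀ (by positivity)
      ((mul_le_of_le_one_left (abs_nonneg _) h5).trans (Complex.abs_re_le_norm _)) 2
  have hcont : Continuous (truncatedPrimitive z a b) :=
    continuous_iff_continuousAt.2 fun x => (hz.hasDerivAt_truncatedPrimitive ha hab x).continuousAt
  have hint : Integrable (fun x => truncatedPrimitive z a b x ^ 2) := by
    refine hi.mono' (hcont.pow 2).aestronglyMeasurable (ae_of_all _ fun x => ?_)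
    rw [Real.norm_eq_abs, abs_of_nonneg (sq_nonneg _)]
    exact hle x
  refine ⟨hint, (integral_mono hint hi hle).trans ?_⟩
  rw [he]
  gcongr

end

namespace MKdVPaper

/-- A function whose profile vanishes at the origin has a square integrable primitive. -/
theorem IsPhys.exists_sq_integrable_primitive {z : ℝ → ℂ} {δ : ℝ} {D : ℝ → ℝ} (hD : IsPhys z 1 D)
    (hz : ProfileBound z δ) (h0 : Tendsto z (𝓝[>] 0) (𝓝 0)) :
    ∃ G : ℝ → ℝ, (∀ x, HasDerivAt G (D x) x) ∧ Integrable fun x => G x ^ 2 := by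
  have hδ := hz.pos
  set a : ℕ → ℝ := fun n => 1 / ((n : ℝ) + 1) with ha
  set b : ℕ → ℝ := fun n => (n : ℝ) + 1 with hb
  have ha0 : ∀ n, 0 < a n := fun n => by positivity
  have hb0 : ∀ n, 0 ≤ b n := fun n => by positivity
  have hab : ∀ n, a n ≤ b n := fun n => by
    have h1 : (1 : ℝ) ≤ n + 1 := by simp
    exact ((div_le_one (by positivity)).2 h1).trans h1
  have hDn : ∀ n x, 1 / Real.pi * (∫ p in a n..b n, airyPhase x p * z p).re
      = physPartial z 1 x (b n) - physPartial z 1 x (a n) := fun n x => by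
    rw [physPartial_one z x (hb0 n), physPartial_one z x (ha0 n).le, ← mul_sub, ← Complex.sub_re,
      intervalIntegral.integral_interval_sub_left (hz.intervalIntegrable x le_rfl (hb0 n))
        (hz.intervalIntegrable x le_rfl (ha0 n).le)]
  have hphys : ∀ x R, 0 ≤ R → |physPartial z 1 x R| ≤ 5 * δ := fun x R hR =>
    (abs_physPartial_le hz x hR).trans (mul_le_of_le_one_right (by positivity) (airyDecay_le_one x))
  refine _root_.exists_sq_integrable_primitive (Gn := fun n => truncatedPrimitive z (a n) (b n))
    (Dn := fun n x => physPartial z 1 x (b n) - physPartial z 1 x (a n)) (K := 10 * δ)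
    (fun n x => ?_) (fun n => ?_) (fun n x => ?_)
    (fun n => (hz.integral_truncatedPrimitive_sq_le h0 (ha0 n) (hab n)).1)
    (fun n => (hz.integral_truncatedPrimitive_sq_le h0 (ha0 n) (hab n)).2) (fun x => ?_)
    (hD.continuous hz)
  · rw [← hDn]
    exact hz.hasDerivAt_truncatedPrimitive (ha0 n) (hab n) x
  · exact (continuous_physPartial hz (hb0 n)).sub (continuous_physPartial hz (ha0 n).le)
  · refine (abs_sub _ _).trans ?_
    linarith [hphys x _ (hb0 n), hphys x _ (ha0 n).le]
  · have h1 : Tendsto (fun n => physPartial z 1 x (b n)) atTop (𝓝 (D x)) :=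
      (hD x).comp (tendsto_atTop_add_const_right _ _ tendsto_natCast_atTop_atTop)
    have h2 : Tendsto (fun n => physPartial z 1 x (a n)) atTop (𝓝 0) := by
      refine squeeze_zero_norm (a := fun n => δ * a n) (fun n => ?_) ?_
      · rw [physPartial_one z x (ha0 n).le, Real.norm_eq_abs, abs_mul, abs_of_pos (by positivity)]
        have h5 : 1 / Real.pi ≤ 1 := by
          rw [div_le_one Real.pi_pos]
          linarith [Real.pi_gt_three]
        refine (mul_le_of_le_one_left (abs_nonneg _) h5).trans ((Complex.abs_re_le_norm _).trans ?_)
        simpa using hz.norm_integral_le x le_rfl (ha0 n).le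
      · simpa [ha] using (tendsto_one_div_add_atTop_nhds_zero_nat (𝕜 := ℝ)).const_mul δ
    simpa using h1.sub h2

end MKdVPaper

end

section

open scoped ContDiff

theorem ProfileBound.sub {w w' : ℝ → ℂ} {δ : ℝ} (hw : ProfileBound w δ) (hw' : ProfileBound w' δ) :
    ProfileBound (fun p => w p - w' p) (2 * δ) := by
  have hd : ∀ p ∈ Ioi (0 : ℝ), ‖deriv (fun p => w p - w' p) p‖ ^ 2
      ≤ 2 * ‖deriv w p‖ ^ 2 + 2 * ‖deriv w' p‖ ^ 2 := fun p hp => by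
    rw [deriv_fun_sub (hw.diff p hp) (hw'.diff p hp)]
    have h1 := pow_le_pow_left₀ (norm_nonneg _) (norm_sub_le (deriv w p) (deriv w' p)) 2
    nlinarith [sq_nonneg (‖deriv w p‖ - ‖deriv w' p‖)]
  have hg : IntegrableOn (fun p => 2 * ‖deriv w p‖ ^ 2 + 2 * ‖deriv w' p‖ ^ 2) (Ioi 0) :=
    (hw.integrable.const_mul 2).add (hw'.integrable.const_mul 2)
  have hi : IntegrableOn (fun p => ‖deriv (fun p => w p - w' p) p‖ ^ 2) (Ioi 0) := by
    refine Integrable.mono' hg ((measurable_deriv _).norm.pow_const 2).aestronglyMeasurable ?_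
    refine (ae_restrict_iff' measurableSet_Ioi).2 (ae_of_all _ fun p hp => ?_)
    rw [Real.norm_eq_abs, abs_of_nonneg (sq_nonneg _)]
    exact hd p hp
  refine ⟨by linarith [hw.pos], fun p hp => (hw.diff p hp).sub (hw'.diff p hp), fun p hp => ?_, hi,
    (setIntegral_mono_on hi hg measurableSet_Ioi hd).trans ?_⟩
  · refine (norm_sub_le _ _).trans ?_
    linarith [hw.bound p hp, hw'.bound p hp]
  · rw [integral_add (hw.integrable.const_mul 2) (hw'.integrable.const_mul 2), integral_const_mul,
      integral_const_mul]
    nlinarith [hw.integral_le, hw'.integral_le]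

namespace MKdVPaper

theorem IsPhys.sub {w w' : ℝ → ℂ} {V V' : ℝ → ℝ} {δ : ℝ} (hV : IsPhys w 1 V) (hV' : IsPhys w' 1 V')
    (hw : ProfileBound w δ) (hw' : ProfileBound w' δ) :
    IsPhys (fun p => w p - w' p) 1 fun x => V x - V' x := fun x => by
  refine ((hV x).sub (hV' x)).congr' ?_
  filter_upwards [eventually_ge_atTop 0] with R hR
  rw [physPartial_one _ x hR, physPartial_one _ x hR, physPartial_one _ x hR, ← mul_sub,
    ← Complex.sub_re, ← intervalIntegral.integral_sub (hw.intervalIntegrable x le_rfl hR)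
      (hw'.intervalIntegrable x le_rfl hR)]
  simp_rw [mul_sub]

theorem SameZeroLimit.tendsto_sub {w w' : ℝ → ℂ} (h : SameZeroLimit w w') :
    Tendsto (fun p => w p - w' p) (𝓝[>] 0) (𝓝 0) := by
  obtain ⟨c, h1, h2⟩ := h
  rw [tendsto_zero_iff_norm_tendsto_zero]
  have h3 := (h1.sub h2).norm
  rw [sub_self, norm_zero] at h3
  refine h3.congr fun p => ?_
  rw [hatAtOne, hatAtOne, ← mul_sub, norm_mul, mul_comm Complex.I, Complex.norm_exp_ofReal_mul_I,
    one_mul]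

theorem SelfSimilar.eq_at_one {S : ESol (Ici 1)} (hS : SelfSimilar S) (t : ℝ) (ht : t ∈ Ici 1)
    (x : ℝ) : S.u t x = t ^ (-(1 / 3 : ℝ)) * S.u 1 (t ^ (-(1 / 3 : ℝ)) * x) := by
  obtain ⟨V, hV⟩ := hS
  rw [hV t ht x, hV 1 self_mem_Ici]
  simp

theorem profile_unique {ε : ℝ} (hε : ε = 1 ∨ ε = -1) {S S' : ESol (Ici 1)}
    (hS : IsSolOn ε S.u (Ici 1)) (hSs : SelfSimilar S) (hSE : EnormP 1 (S.w 1) ≤ 1 / 100)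
    (hS' : IsSolOn ε S'.u (Ici 1)) (hSs' : SelfSimilar S') (hSE' : EnormP 1 (S'.w 1) ≤ 1 / 100)
    (h0 : SameZeroLimit (S.w 1) (S'.w 1)) (x : ℝ) : S.u 1 x = S'.u 1 x := by
  have h1 : (1 : ℝ) ∈ Ici (1 : ℝ) := self_mem_Ici
  have hw := (S.memE 1 h1).profileBound (by norm_num) hSE
  have hw' := (S'.memE 1 h1).profileBound (by norm_num) hSE'
  set V := S.u 1 with hVdef
  set V' := S'.u 1 with hVdef'
  have hV : IsPhys (S.w 1) 1 V := S.isPhys 1 h1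
  have hV' : IsPhys (S'.w 1) 1 V' := S'.isPhys 1 h1
  have hVc := hV.continuous hw
  have hVc' := hV'.continuous hw'
  have hVb := hV.abs_le hw
  have hVb' := hV'.abs_le hw'
  set D : ℝ → ℝ := fun x => V x - V' x with hDdef
  set q : ℝ → ℝ := fun x => ε * (V x ^ 2 + V x * V' x + V' x ^ 2) with hqdef
  have hDp : IsPhys _ 1 D := hV.sub hV' hw hw'
  have hDb := hDp.abs_le (hw.sub hw')
  have hD0 : Tendsto D (cocompact ℝ) (𝓝 0) :=
    squeeze_zero_norm hDb (by simpa using tendsto_airyDecay.const_mul (5 * (2 * (1 / 100 : ℝ))))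
  have hε1 : |ε| = 1 := by rcases hε with rfl | rfl <;> simp
  have hqb : ∀ y, |q y| ≤ 75 / 10000 * airyDecay y ^ 2 := fun y => by
    have hm : ∀ s t : ℝ, |s| ≤ 5 * (1 / 100) * airyDecay y → |t| ≤ 5 * (1 / 100) * airyDecay y →
        |s * t| ≤ 25 / 10000 * airyDecay y ^ 2 := fun s t hs ht => by
      rw [abs_mul]
      refine (mul_le_mul hs ht (abs_nonneg _) ((abs_nonneg _).trans hs)).trans (le_of_eq ?_)
      ring
    rw [hqdef]
    simp only
    rw [abs_mul, hε1, one_mul, sq, sq]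
    refine (abs_add_le _ _).trans ?_
    have := abs_add_le (V y * V y) (V y * V' y)
    linarith [hm _ _ (hVb y) (hVb y), hm _ _ (hVb y) (hVb' y), hm _ _ (hVb' y) (hVb' y)]
  have hq1 : ∀ y, |q y| ≤ 1 := fun y => (hqb y).trans (by
    have := pow_le_one₀ (n := 2) (airyDecay_pos y).le (airyDecay_le_one y)
    linarith)
  have hq2 : ∀ y, 2052 * q y ^ 2 ≤ (√(1 + y ^ 2))⁻¹ := fun y => by
    have h2 := pow_le_pow_left₀ (abs_nonneg _) (hqb y) 2
    rw [sq_abs] at h2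
    have h3 := airyDecay_pow_four_le y
    have h4 : 0 ≤ (√(1 + y ^ 2))⁻¹ := by positivity
    nlinarith
  have hDc : Continuous D := hVc.sub hVc'
  have hnc : Continuous fun y => y * D y / 3 - q y * D y := by fun_prop
  obtain ⟨D₁, β, hD1, hD2⟩ := exists_hasDerivAt_of_integral_eq_zero hDc hnc fun ψ hψ hψc => by
    have e1 := hS.profile_eq hVc hSs.eq_at_one hψ hψc
    have e2 := hS'.profile_eq hVc' hSs'.eq_at_one hψ hψc
    have hψ1 : ContDiff ℝ ∞ (deriv ψ) := (contDiff_infty_iff_deriv.1 hψ).2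
    have hψ2 : ContDiff ℝ ∞ (deriv (deriv ψ)) := (contDiff_infty_iff_deriv.1 hψ1).2
    have c1 := hψ1.continuous
    have c3 := (contDiff_infty_iff_deriv.1 hψ2).2.continuous
    have hint : ∀ U : ℝ → ℝ, Continuous U → Integrable fun y =>
        U y * (deriv (deriv (deriv ψ)) y - y * deriv ψ y / 3) + ε * U y ^ 3 * deriv ψ y :=
      fun U hU => by
        refine Continuous.integrable_of_hasCompactSupport (by fun_prop) ?_
        refine HasCompactSupport.add ?_ hψc.deriv.mul_left
        refine HasCompactSupport.mul_left (hψc.deriv.deriv.deriv.sub ?_)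
        exact (hψc.deriv.mul_left (f := fun y => y)).mul_right (f' := fun _ => (3 : ℝ)⁻¹)
    have e3 := integral_sub (hint V hVc) (hint V' hVc')
    rw [e1, e2, sub_zero] at e3
    rw [← e3]
    refine integral_congr_ae (ae_of_all _ fun y => ?_)
    simp only [hDdef, hqdef]
    ring
  obtain ⟨G, hG, hGi⟩ := hDp.exists_sq_integrable_primitive (hw.sub hw') h0.tendsto_sub
  have hK : ∀ y, |D y| ≤ 1 := fun y => (hDb y).trans (by
    have := airyDecay_le_one y
    linarith)
  have hβ : β = 0 := const_eq_zero_of_sq_integrable hG hD1 hD2 hq1 hK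
    (hD0.mono_left atTop_le_cocompact) hGi
  subst hβ
  simp only [add_zero] at hD2
  exact sub_eq_zero.1 (eq_zero_of_perturbed_airy hG hD1 hD2 hq2 hK hD0 hGi x)

end MKdVPaper

end

namespace MKdVPaper

/-- uniqueness of small self-similar solutions. -/
theorem selfsimilar_uniqueness :
    ∃ δ : ℝ, 0 < δ ∧
    ∀ ε : ℝ, (ε = 1 ∨ ε = -1) →
    ∀ S S' : ESol (Ici 1),
      IsSolOn ε S.u (Ici 1) → SelfSimilar S → EnormP 1 (S.w 1) ≤ δ →
      IsSolOn ε S'.u (Ici 1) → SelfSimilar S' → EnormP 1 (S'.w 1) ≤ δ →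
      SameZeroLimit (S.w 1) (S'.w 1) →
      ∀ t ∈ Ici (1 : ℝ), ∀ x : ℝ, S.u t x = S'.u t x := by
  refine ⟨1 / 100, by norm_num, fun ε hε S S' h1 h2 h3 h4 h5 h6 h7 t ht x => ?_⟩
  rw [h2.eq_at_one t ht, h5.eq_at_one t ht, profile_unique hε h1 h2 h3 h4 h5 h6 h7]

end MKdVPaper
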